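/- Fix k ≥ 1 and assume the Hardy–Littlewood conjecture uniformly: π_{k+1}(x, {0}∪D_k) = S({0}∪D_k) · x/(log x)^{k+1} · (1+o(1)) uniformly for D_k ⊂ [2, (log x)^{k+1}] with S({0}∪D_k) ≠ 0. Then for every prime p there exists X such that for all x ≥ X, every k-tuple jumping champion D_k* for x has p dividing every element of D_k*. -/

import Mathlib

open Finset

/-- Number of residue classes mod `p` occupied by the elements of `D`. -/
def nu (D : Finset ℕ) (p : ℕ) : ℕ := (D.image (· % p)).card

/-- The Hardy–Littlewood singular series of a finite set `D`. -/
noncomputable def singSeries (D : Finset ℕ) : ℝ :=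
  ∏' p : Nat.Primes, ((1 - 1 / ((p : ℕ) : ℝ)) ^ D.card)⁻¹ * (1 - (nu D (p : ℕ) : ℝ) / ((p : ℕ) : ℝ))

/-- `primePi x D` counts positive integers `m ≤ x` with `m + d` prime for all `d ∈ D`. -/
noncomputable def primePi (x : ℝ) (D : Finset ℕ) : ℕ :=
  {m : ℕ | 0 < m ∧ (m : ℝ) ≤ x ∧ ∀ d ∈ D, Nat.Prime (m + d)}.ncard

/-- `Ncham x D` counts `n` such that `p_{n+k} ≤ x` and the gaps `p_{n+i} - p_n` for
`i = 1, …, k` are exactly the elements of `D` (with `k = D.card`). -/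
noncomputable def Ncham (x : ℝ) (D : Finset ℕ) : ℕ :=
  {n : ℕ | ((Nat.nth Nat.Prime (n + D.card) : ℝ) ≤ x) ∧
    (Finset.range D.card).image
      (fun i => Nat.nth Nat.Prime (n + i + 1) - Nat.nth Nat.Prime n) = D}.ncard

/-- `D` is a `k`-tuple jumping champion for `x`. -/
def IsChampion (k : ℕ) (x : ℝ) (D : Finset ℕ) : Prop :=
  D.card = k ∧ (∀ d ∈ D, 0 < d) ∧
    ∀ D' : Finset ℕ, D'.card = k → (∀ d ∈ D', 0 < d) → Ncham x D' ≤ Ncham x D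

/-- Number of prime factors counted with multiplicity. -/
def bigOmega (n : ℕ) : ℕ := n.primeFactorsList.length

/-- The `n`-th primorial `2·3·5⋯p_n`. -/
noncomputable def primorial' (n : ℕ) : ℕ := ∏ i ∈ Finset.range n, Nat.nth Nat.Prime i

/-- The largest primorial not exceeding `y` (equal to `1` if `y < 1`). -/
noncomputable def largestPrimorial (y : ℝ) : ℕ :=
  primorial' (sSup {n : ℕ | (primorial' n : ℝ) ≤ y})

/-!
Write `L = log x` and `l = log L`, let `Y ≈ l / 8`, let `P` be the product of the primes up to `Y`,
and let `M = ∏_{q ≤ Y} (1 - 1/q)⁻¹`, which tends to infinity with `x`. Since `P, …, kP` vanish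
modulo every prime up to `Y`, the set `{0, P, …, kP}` has singular series at least
`(1 - o(1)) M ^ k`. As `P` is only a small power of `L`, Brun's sieve for `k + 2` primes shows that
almost all the prime tuples of this shape consist of consecutive primes. So a champion occurs at
least `(1 - o(1)) M ^ k x / L ^ (k + 1)` times. Because `M → ∞`, this excludes inadmissible sets
and sets with an element above `L ^ (k + 1)`, the latter occurring at most `k x / L ^ (k + 1)`
times. If a prime `p` misses an element of an admissible set `D ⊆ [2, L ^ (k + 1)]`, then
`{0} ∪ D` occupies at least two classes modulo `p`, which costs its singular series a factor
`1 - 1/(p - 1)` against `M ^ k`. The primes above `Y` win back only a factor `1 + o(1)`, as too few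
of them divide differences of numbers up to `L ^ (k + 1)`. Hence `D` is not a champion.
-/

namespace JumpingChampion

open Filter

/-! ### Mertens products -/

/-- The Mertens product `∏_{q ≤ Y} (1 - 1/q)⁻¹` over primes; it grows at least like `log Y`,
and singular series of `k + 1` elements are compared with its `k`-th power. -/
noncomputable def mertensProd (Y : ℕ) : ℝ := ∏ q ∈ Nat.primesLE Y, (1 - 1 / (q : ℝ))⁻¹

lemma one_sub_one_div_pos {q : ℕ} (hq : 1 < q) : 0 < 1 - 1 / (q : ℝ) := by
  have hq' : (1 : ℝ) < q := mod_cast hq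
  rw [sub_pos, div_lt_one (by positivity)]
  exact hq'

lemma mertensProd_pos (Y : ℕ) : 0 < mertensProd Y :=
  prod_pos fun _ hq ↦ inv_pos.2 (one_sub_one_div_pos (Nat.one_lt_of_mem_primesLE hq))

lemma mem_smoothNumbers_of_mem_Icc {Y i : ℕ} (hi : i ∈ Icc 1 Y) :
    i ∈ Nat.smoothNumbers (Y + 1) := by
  obtain ⟨hi₁, hiY⟩ := mem_Icc.1 hi
  exact Nat.mem_smoothNumbers.2 ⟨by lia, fun p hp ↦
    Nat.lt_succ_of_le ((Nat.le_of_mem_primeFactorsList hp).trans hiY)⟩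

lemma harmonic_le_mertensProd (Y : ℕ) : (harmonic Y : ℝ) ≤ mertensProd Y := by
  let f : ℕ →* ℝ := (invMonoidWithZeroHom (G₀ := ℝ)).toMonoidHom.comp (Nat.castRingHom ℝ)
  have f_apply (n : ℕ) : f n = (n : ℝ)⁻¹ := rfl
  have f_lt_one {p : ℕ} (hp : p.Prime) : ‖f p‖ < 1 := by
    rw [f_apply, Real.norm_of_nonneg (by positivity)]
    exact inv_lt_one_of_one_lt₀ (mod_cast hp.one_lt)
  have euler := (EulerProduct.summable_and_hasSum_smoothNumbers_prod_primesBelow_geometric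
    f_lt_one (Y + 1)).2
  have smooth_sum : HasSum ((Nat.smoothNumbers (Y + 1)).indicator f) (mertensProd Y) := by
    simp only [← hasSum_subtype_iff_indicator, mertensProd, one_div]
    exact euler
  calc (harmonic Y : ℝ) = ∑ i ∈ Icc 1 Y, (Nat.smoothNumbers (Y + 1)).indicator f i := by
        rw [harmonic_eq_sum_Icc, Rat.cast_sum]
        refine sum_congr rfl fun i hi ↦ ?_
        rw [Set.indicator_of_mem (mem_smoothNumbers_of_mem_Icc hi), f_apply]
        push_cast
        rfl
    _ ≤ mertensProd Y := by
        refine sum_le_hasSum _ (fun i _ ↦ ?_) smooth_sum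
        exact Set.indicator_nonneg (fun m _ ↦ inv_nonneg.2 (Nat.cast_nonneg m)) i

lemma log_le_mertensProd (Y : ℕ) : Real.log Y ≤ mertensProd Y := by
  refine le_trans ?_ ((log_add_one_le_harmonic Y).trans (harmonic_le_mertensProd Y))
  rcases Y.eq_zero_or_pos with rfl | hY
  · simp
  · exact Real.log_le_log (mod_cast hY) (by push_cast; linarith)

lemma inv_one_sub_one_div_le_exp {q : ℕ} (hq : 1 < q) :
    (1 - 1 / (q : ℝ))⁻¹ ≤ Real.exp (1 / ((q : ℝ) - 1)) := by
  have hq' : (0 : ℝ) < q - 1 := sub_pos.2 (mod_cast hq)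
  calc (1 - 1 / (q : ℝ))⁻¹ = 1 / ((q : ℝ) - 1) + 1 := by
        have : (q : ℝ) ≠ 0 := by linarith
        field_simp
        ring
    _ ≤ _ := Real.add_one_le_exp _

lemma mertensProd_le_exp (n : ℕ) :
    mertensProd n ≤ Real.exp (∑ q ∈ Nat.primesLE n, 1 / (q : ℝ) + 2) := by
  have factor_le {q : ℕ} (hq : q ∈ Nat.primesLE n) :
      (1 - 1 / (q : ℝ))⁻¹ ≤ Real.exp (1 / (q : ℝ) + 2 * ((q : ℝ) ^ 2)⁻¹) := by
    have hq₂ : (2 : ℝ) ≤ q := mod_cast Nat.two_le_of_mem_primesLE hq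
    refine (inv_one_sub_one_div_le_exp (Nat.one_lt_of_mem_primesLE hq)).trans
      (Real.exp_le_exp.2 ?_)
    have hq₁ : (0 : ℝ) < q - 1 := by linarith
    rw [div_add' _ _ _ (by positivity), div_le_div_iff₀ hq₁ (by positivity)]
    field_simp
    linarith
  have sum_sq_le : ∑ q ∈ Nat.primesLE n, ((q : ℝ) ^ 2)⁻¹ ≤ 1 := by
    have hsub : Nat.primesLE n ⊆ Ioc 1 n := fun q hq ↦
      mem_Ioc.2 ⟨Nat.one_lt_of_mem_primesLE hq, Nat.le_of_mem_primesLE hq⟩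
    refine (sum_le_sum_of_subset_of_nonneg hsub fun _ _ _ ↦ by positivity).trans ?_
    rcases n.eq_zero_or_pos with rfl | hn
    · simp
    · refine (sum_Ioc_inv_sq_le_sub one_ne_zero hn).trans ?_
      simp
  calc mertensProd n
      ≤ ∏ q ∈ Nat.primesLE n, Real.exp (1 / (q : ℝ) + 2 * ((q : ℝ) ^ 2)⁻¹) :=
        prod_le_prod (fun q hq ↦ (inv_pos.2 (one_sub_one_div_pos
          (Nat.one_lt_of_mem_primesLE hq))).le) fun q hq ↦ factor_le hq
    _ ≤ Real.exp (∑ q ∈ Nat.primesLE n, 1 / (q : ℝ) + 2) := by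
        rw [← Real.exp_sum, sum_add_distrib, ← mul_sum]
        exact Real.exp_le_exp.2 (by linarith)

lemma log_log_sub_two_le_sum_primesLE {n : ℕ} (hn : 2 ≤ n) :
    Real.log (Real.log n) - 2 ≤ ∑ q ∈ Nat.primesLE n, 1 / (q : ℝ) := by
  have hlog : 0 < Real.log n := Real.log_pos (mod_cast hn)
  rw [sub_le_iff_le_add, ← Real.log_exp (_ + 2)]
  exact Real.log_le_log hlog ((log_le_mertensProd n).trans (mertensProd_le_exp n))

lemma exists_subset_sum_mem_Icc {ι : Type*} {s : Finset ι} {f : ι → ℝ} {c : ℝ}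
    (hf : ∀ i ∈ s, f i ≤ 1) (hc₀ : 0 ≤ c) (hc : c ≤ ∑ i ∈ s, f i) :
    ∃ t ⊆ s, ∑ i ∈ t, f i ∈ Set.Icc (c - 1) c := by
  classical
  induction s using Finset.induction_on with
  | empty => exact ⟨∅, Subset.rfl, by simp_all; linarith⟩
  | insert a s ha ih =>
    by_cases hs : c ≤ ∑ i ∈ s, f i
    · obtain ⟨t, hts, ht⟩ := ih (fun i hi ↦ hf i (mem_insert_of_mem hi)) hs
      exact ⟨t, hts.trans (subset_insert a s), ht⟩
    · rw [sum_insert ha] at hc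
      have hfa := hf a (mem_insert_self a s)
      exact ⟨s, subset_insert a s, by linarith, by linarith⟩

/-! ### Prime divisors of differences -/

/-- The product `∏_{a < b} (b - a)` of all differences in `D`. The primes not dividing it are those
modulo which the elements of `D` remain distinct. -/
def diffProd (D : Finset ℕ) : ℕ := ∏ a ∈ D, ∏ b ∈ D with a < b, (b - a)

lemma diffProd_ne_zero (D : Finset ℕ) : diffProd D ≠ 0 := by
  refine prod_ne_zero_iff.2 fun _ _ ↦ prod_ne_zero_iff.2 fun _ hb ↦ ?_
  exact (Nat.sub_pos_of_lt (mem_filter.1 hb).2).ne'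

lemma injOn_mod_of_not_dvd_diffProd {D : Finset ℕ} {q : ℕ} (h : ¬ q ∣ diffProd D) :
    Set.InjOn (· % q) D := by
  have no_collision {a b : ℕ} (ha : a ∈ D) (hb : b ∈ D) (hab : a < b) : a % q ≠ b % q := by
    refine fun hmod ↦ h (((Nat.modEq_iff_dvd' hab.le).1 hmod).trans ?_)
    have h_inner : b - a ∣ ∏ b ∈ D with a < b, (b - a) :=
      dvd_prod_of_mem _ (mem_filter.2 ⟨hb, hab⟩)
    exact h_inner.trans (dvd_prod_of_mem (fun a ↦ ∏ b ∈ D with a < b, (b - a)) ha)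
  intro a ha b hb hmod
  by_contra hne
  rcases Nat.lt_or_gt_of_ne hne with hab | hba
  · exact no_collision ha hb hab hmod
  · exact no_collision hb ha hba hmod.symm

lemma nu_eq_card {D : Finset ℕ} {q : ℕ} (h : Set.InjOn (· % q) (D : Set ℕ)) : nu D q = #D :=
  card_image_of_injOn h

lemma log_diffProd_le {D : Finset ℕ} {A : ℝ} (hA : 1 ≤ A) (hD : ∀ d ∈ D, (d : ℝ) ≤ A) :
    Real.log (diffProd D) ≤ (#D : ℝ) ^ 2 * Real.log A := by
  have log_sub_le {a b : ℕ} (hb : b ∈ D) (hab : a < b) :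
      Real.log ((b - a : ℕ) : ℝ) ≤ Real.log A := by
    refine Real.log_le_log (mod_cast Nat.sub_pos_of_lt hab) (le_trans ?_ (hD b hb))
    exact mod_cast b.sub_le a
  have hlogA : 0 ≤ Real.log A := Real.log_nonneg hA
  have cast_sub_ne_zero (a : ℕ) : ∀ b ∈ D.filter (a < ·), ((b - a : ℕ) : ℝ) ≠ 0 :=
    fun _ hb ↦ mod_cast (Nat.sub_pos_of_lt (mem_filter.1 hb).2).ne'
  simp only [diffProd, Nat.cast_prod]
  rw [Real.log_prod fun a _ ↦ prod_ne_zero_iff.2 (cast_sub_ne_zero a)]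
  calc ∑ a ∈ D, Real.log (∏ b ∈ D with a < b, ((b - a : ℕ) : ℝ))
      ≤ ∑ _a ∈ D, ∑ _b ∈ D, Real.log A := sum_le_sum fun a _ ↦ by
        rw [Real.log_prod (cast_sub_ne_zero a)]
        refine (sum_le_sum fun _ hb ↦ ?_).trans
          (sum_le_sum_of_subset_of_nonneg (filter_subset _ D) fun _ _ _ ↦ hlogA)
        exact log_sub_le (mem_filter.1 hb).1 (mem_filter.1 hb).2
    _ = (#D : ℝ) ^ 2 * Real.log A := by
        simp only [sum_const, nsmul_eq_mul]
        ring

lemma pow_card_le_of_subset_primeFactors {n y : ℕ} (hn : n ≠ 0) {s : Finset ℕ}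
    (hs : s ⊆ n.primeFactors) (hy : ∀ q ∈ s, y ≤ q) : y ^ #s ≤ n :=
  calc y ^ #s ≤ ∏ q ∈ s, q := pow_card_le_prod s _ y hy
    _ ≤ n := Nat.le_of_dvd (Nat.pos_of_ne_zero hn)
        ((prod_dvd_prod_of_subset _ _ _ hs).trans n.prod_primeFactors_dvd)

lemma card_primeFactors_le_two_mul_log {n : ℕ} (hn : n ≠ 0) :
    (#n.primeFactors : ℝ) ≤ 2 * Real.log n := by
  have two_pow_le : (2 : ℝ) ^ #n.primeFactors ≤ n := mod_cast
    pow_card_le_of_subset_primeFactors hn Subset.rfl fun _ hq ↦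
      (Nat.prime_of_mem_primeFactors hq).two_le
  have hlog := Real.log_le_log (by positivity) two_pow_le
  rw [Real.log_pow] at hlog
  nlinarith [Real.log_two_gt_d9, (#n.primeFactors).cast_nonneg (α := ℝ)]

lemma sum_inv_le_harmonic_card {s : Finset ℕ} (hs : ∀ i ∈ s, 0 < i) :
    ∑ i ∈ s, 1 / (i : ℝ) ≤ harmonic #s := by
  induction s using Finset.induction_on_max with
  | empty => simp
  | insert a s ha ih =>
    have h_card : #s + 1 ≤ a := by
      have hsub : s ⊆ Ioo 0 a := fun i hi ↦ mem_Ioo.2 ⟨hs i (mem_insert_of_mem hi), ha i hi⟩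
      have := (card_le_card hsub).trans_eq (Nat.card_Ioo 0 a)
      have := hs a (mem_insert_self a s)
      lia
    have has : a ∉ s := fun h ↦ (ha a h).false
    rw [sum_insert has, card_insert_of_notMem has, harmonic_succ, Rat.cast_add, add_comm]
    refine add_le_add (ih fun i hi ↦ hs i (mem_insert_of_mem hi)) ?_
    push_cast
    rw [one_div]
    exact inv_anti₀ (by positivity) (mod_cast h_card)

lemma sum_inv_le_one_add_log {s : Finset ℕ} (hs : ∀ i ∈ s, 0 < i) {m : ℝ} (hm : 1 ≤ m)
    (hsm : (#s : ℝ) ≤ m) : ∑ i ∈ s, 1 / (i : ℝ) ≤ 1 + Real.log m := by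
  refine (sum_inv_le_harmonic_card hs).trans ((harmonic_le_one_add_log #s).trans ?_)
  gcongr 1 + ?_
  rcases (#s).eq_zero_or_pos with h0 | hpos
  · rw [h0, Nat.cast_zero, Real.log_zero]
    exact Real.log_nonneg hm
  · exact Real.log_le_log (mod_cast hpos) hsm

/-! ### Brun's sieve -/

section

variable {ι α : Type*}

lemma alternating_sum_powerset_filter_card_le (B : Finset ι) (R : ℕ) :
    ∑ T ∈ B.powerset with #T ≤ R, (-1 : ℝ) ^ #T =
      ∑ j ∈ range (R + 1), (-1) ^ j * ((#B).choose j : ℝ) := by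
  rw [← sum_fiberwise_of_maps_to (g := card) (t := range (R + 1))
    fun T hT ↦ mem_range_succ_iff.2 (mem_filter.1 hT).2]
  refine sum_congr rfl fun j hj ↦ ?_
  have fiber_eq : {T ∈ {T ∈ B.powerset | #T ≤ R} | #T = j} = powersetCard j B := by
    ext T
    simp only [mem_filter, mem_powerset, mem_powersetCard]
    have := mem_range_succ_iff.1 hj
    lia
  rw [fiber_eq, sum_congr rfl fun T hT ↦ by rw [(mem_powersetCard.1 hT).2], sum_const,
    card_powersetCard, nsmul_eq_mul, mul_comm]

lemma indicator_empty_le_alternating_sum [DecidableEq ι] (B : Finset ι) {R : ℕ} (hR : Even R) :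
    (if B = ∅ then (1 : ℝ) else 0) ≤ ∑ T ∈ B.powerset with #T ≤ R, (-1 : ℝ) ^ #T := by
  rw [alternating_sum_powerset_filter_card_le]
  split_ifs with hB
  · rw [hB, sum_range_succ']
    simp
  · obtain ⟨n, hn⟩ := Nat.exists_eq_succ_of_ne_zero (card_ne_zero.2 (nonempty_iff_ne_empty.2 hB))
    have h_choose : ∑ j ∈ range (R + 1), (-1 : ℝ) ^ j * ((n + 1).choose j : ℝ) =
        (-1) ^ R * (n.choose R : ℝ) := mod_cast Int.alternating_sum_range_choose_eq_choose
    rw [hn, h_choose, hR.neg_one_pow]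
    positivity

lemma card_filter_forall_not_le (s : Finset α) (P : Finset ι) (r : ι → α → Prop) {R : ℕ}
    (hR : Even R) [∀ i m, Decidable (r i m)] :
    (#{m ∈ s | ∀ i ∈ P, ¬ r i m} : ℝ) ≤
      ∑ T ∈ P.powerset with #T ≤ R, (-1) ^ #T * (#{m ∈ s | ∀ i ∈ T, r i m} : ℝ) := by
  classical
  calc (#{m ∈ s | ∀ i ∈ P, ¬ r i m} : ℝ)
      = ∑ m ∈ s, if {i ∈ P | r i m} = ∅ then (1 : ℝ) else 0 := by
        simp only [filter_eq_empty_iff, natCast_card_filter]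
    _ ≤ ∑ m ∈ s, ∑ T ∈ powerset {i ∈ P | r i m} with #T ≤ R, (-1 : ℝ) ^ #T :=
        sum_le_sum fun m _ ↦ indicator_empty_le_alternating_sum _ hR
    _ = ∑ m ∈ s, ∑ T ∈ P.powerset with #T ≤ R, if ∀ i ∈ T, r i m then (-1 : ℝ) ^ #T else 0 := by
        refine sum_congr rfl fun m _ ↦ ?_
        rw [← sum_filter]
        refine sum_congr ?_ fun _ _ ↦ rfl
        ext T
        simp only [mem_filter, mem_powerset, subset_iff]
        grind
    _ = _ := by
        rw [sum_comm]
        refine sum_congr rfl fun T _ ↦ ?_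
        rw [← sum_filter, sum_const, nsmul_eq_mul, mul_comm]

-- Rankin's trick: a subset with more than `R` elements is charged with the weight `e ^ (#T - R)`.
lemma truncated_sum_prod_le {P : Finset ι} {f : ι → ℝ} (hf₀ : ∀ i ∈ P, 0 ≤ f i)
    (hf₁ : ∀ i ∈ P, f i ≤ 1) (R : ℕ) :
    ∑ T ∈ P.powerset with #T ≤ R, (-1) ^ #T * ∏ i ∈ T, f i ≤
      Real.exp (-∑ i ∈ P, f i) + Real.exp (-R + Real.exp 1 * ∑ i ∈ P, f i) := by
  have term_le {T : Finset ι} (hT : T ∈ P.powerset) :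
      (if #T ≤ R then (-1) ^ #T * ∏ i ∈ T, f i else 0) ≤
        ∏ i ∈ T, -f i + Real.exp (-R) * ∏ i ∈ T, Real.exp 1 * f i := by
    have hW : 0 ≤ ∏ i ∈ T, f i := prod_nonneg fun i hi ↦ hf₀ i (mem_powerset.1 hT hi)
    rw [prod_neg, prod_mul_distrib, prod_const, ← mul_assoc, ← Real.exp_nat_mul, ← Real.exp_add]
    split_ifs with hTR
    · exact le_add_of_nonneg_right (by positivity)
    · have one_le : 1 ≤ Real.exp (-R + #T * 1) := Real.one_le_exp (by
        have : (R : ℝ) ≤ #T := mod_cast (not_le.1 hTR).le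
        linarith)
      rcases neg_one_pow_eq_or ℝ #T with h | h <;> rw [h] <;> nlinarith
  calc ∑ T ∈ P.powerset with #T ≤ R, (-1) ^ #T * ∏ i ∈ T, f i
      ≤ ∑ T ∈ P.powerset, (∏ i ∈ T, -f i + Real.exp (-R) * ∏ i ∈ T, Real.exp 1 * f i) := by
        rw [sum_filter]
        exact sum_le_sum fun T hT ↦ term_le hT
    _ = ∏ i ∈ P, (1 + -f i) + Real.exp (-R) * ∏ i ∈ P, (1 + Real.exp 1 * f i) := by
        rw [sum_add_distrib, ← mul_sum, ← prod_one_add, ← prod_one_add]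
    _ ≤ _ := by
        rw [Real.exp_add, mul_sum, ← sum_neg_distrib, Real.exp_sum, Real.exp_sum]
        have exp_nonneg := (Real.exp_pos (1 : ℝ)).le
        gcongr with i _ i _
        · exact fun i hi ↦ by linarith [hf₁ i hi]
        · linarith [Real.add_one_le_exp (-f i)]
        · exact fun i hi ↦ add_nonneg zero_le_one (mul_nonneg exp_nonneg (hf₀ i hi))
        · linarith [Real.add_one_le_exp (Real.exp 1 * f i)]

lemma truncated_sum_pow_card_le {P : Finset ι} {κ Z : ℝ} (hκ : 0 ≤ κ) (hZ : 1 ≤ Z)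
    (hP : (#P : ℝ) ≤ Z) (R : ℕ) :
    ∑ T ∈ P.powerset with #T ≤ R, κ ^ #T ≤ Z ^ R * Real.exp κ := by
  have hZ₀ : 0 < Z := by linarith
  calc ∑ T ∈ P.powerset with #T ≤ R, κ ^ #T
      ≤ ∑ T ∈ P.powerset with #T ≤ R, Z ^ R * ∏ _i ∈ T, κ / Z := sum_le_sum fun T hT ↦ by
        rw [prod_const, div_pow, mul_div_assoc', le_div_iff₀ (by positivity), mul_comm]
        gcongr
        exact (mem_filter.1 hT).2
    _ ≤ ∑ T ∈ P.powerset, Z ^ R * ∏ _i ∈ T, κ / Z :=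
        sum_le_sum_of_subset_of_nonneg (filter_subset _ _) fun _ _ _ ↦ by positivity
    _ = Z ^ R * (1 + κ / Z) ^ #P := by rw [← mul_sum, ← prod_one_add, prod_const]
    _ ≤ Z ^ R * Real.exp (κ / Z) ^ #P := by
        gcongr
        linarith [Real.add_one_le_exp (κ / Z)]
    _ ≤ Z ^ R * Real.exp κ := by
        rw [← Real.exp_nat_mul]
        gcongr
        rw [mul_div_assoc', div_le_iff₀ hZ₀, mul_comm κ]
        gcongr

lemma exists_forall_dvd_add_iff_modEq {t : Finset ι} {s : ι → ℕ} (a : ι → ℕ)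
    (hs : ∀ i ∈ t, s i ≠ 0) (hco : (t : Set ι).Pairwise (Function.onFun Nat.Coprime s)) :
    ∃ v, ∀ m, (∀ i ∈ t, s i ∣ m + a i) ↔ m ≡ v [MOD ∏ i ∈ t, s i] := by
  obtain ⟨v, hv⟩ := Nat.chineseRemainderOfFinset (fun i ↦ (s i - 1) * a i) s t hs hco
  refine ⟨v, fun m ↦ ?_⟩
  have modEq_iff : m ≡ v [MOD ∏ i ∈ t, s i] ↔ ∀ i ∈ t, m ≡ v [MOD s i] := by
    refine ⟨fun h i hi ↦ h.of_dvd (dvd_prod_of_mem s hi), fun h ↦ ?_⟩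
    rw [Nat.modEq_iff_dvd, Nat.cast_prod]
    exact prod_dvd_of_coprime (fun i hi j hj hij ↦ Nat.isCoprime_iff_coprime.2 (hco hi hj hij))
      fun i hi ↦ (Nat.modEq_iff_dvd.1 (h i hi))
  rw [modEq_iff]
  refine forall₂_congr fun i hi ↦ ?_
  have v_add : v + a i ≡ 0 [MOD s i] := by
    refine ((hv i hi).add_right (a i)).trans (Nat.modEq_zero_iff_dvd.2 ⟨a i, ?_⟩)
    rw [← Nat.succ_mul, Nat.succ_eq_add_one, Nat.sub_add_cancel (Nat.pos_of_ne_zero (hs i hi))]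
  rw [← Nat.modEq_zero_iff_dvd]
  exact ⟨fun h ↦ (h.trans v_add.symm).add_right_cancel' _, fun h ↦ (h.add_right _).trans v_add⟩

end

lemma abs_card_filter_modEq_sub_le (N : ℕ) {Q : ℕ} (hQ : 0 < Q) (v : ℕ) :
    |(#{m ∈ range N | m ≡ v [MOD Q]} : ℝ) - N / Q| ≤ 1 := by
  rw [← Nat.count_eq_card_filter_range, Nat.count_modEq_card N hQ]
  have h_floor : (N / Q : ℕ) = ⌊(N : ℝ) / Q⌋₊ := (Nat.floor_div_eq_div N Q).symm
  have h_le : ((N / Q : ℕ) : ℝ) ≤ N / Q := Nat.cast_div_le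
  have h_lt : (N : ℝ) / Q < (N / Q : ℕ) + 1 := h_floor ▸ Nat.lt_floor_add_one _
  rw [abs_le]
  split_ifs <;> push_cast <;> constructor <;> linarith

lemma abs_card_filter_forall_dvd_sub_le {T : Finset ℕ} (hT : ∀ q ∈ T, q.Prime) (a : T → ℕ)
    (N : ℕ) : |(#{m ∈ range N | ∀ q : T, (q : ℕ) ∣ m + a q} : ℝ) - N / ∏ q ∈ T, (q : ℝ)| ≤ 1 := by
  obtain ⟨v, hv⟩ := exists_forall_dvd_add_iff_modEq (t := univ) (s := fun q : T ↦ (q : ℕ)) a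
    (fun q _ ↦ (hT q q.2).ne_zero) fun q _ r _ hqr ↦
      (Nat.coprime_primes (hT q q.2) (hT r r.2)).2 (Subtype.coe_ne_coe.2 hqr)
  simp only [mem_univ, true_imp_iff, prod_coe_sort T fun q ↦ q] at hv
  simp only [hv]
  rw [← Nat.cast_prod]
  exact abs_card_filter_modEq_sub_le N (prod_pos fun q hq ↦ (hT q hq).pos) v

lemma card_filter_exists_dvd_eq_sum {E T : Finset ℕ}
    (hinj : ∀ q ∈ T, Set.InjOn (· % q) (E : Set ℕ)) (N : ℕ) :
    #{m ∈ range N | ∀ q ∈ T, ∃ h ∈ E, q ∣ m + h} =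
      ∑ a ∈ Fintype.piFinset fun _ : T ↦ E, #{m ∈ range N | ∀ q : T, (q : ℕ) ∣ m + a q} := by
  rw [← card_biUnion]
  · congr 1
    ext m
    simp only [mem_filter, mem_biUnion, Fintype.mem_piFinset]
    constructor
    · rintro ⟨hm, hdvd⟩
      choose a haE ha using hdvd
      exact ⟨fun q ↦ a q q.2, fun q ↦ haE q q.2, hm, fun q ↦ ha q q.2⟩
    · rintro ⟨a, haE, hm, ha⟩
      exact ⟨hm, fun q hq ↦ ⟨a ⟨q, hq⟩, haE _, ha ⟨q, hq⟩⟩⟩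
  · refine fun a ha b hb hab ↦ disjoint_left.2 fun m hma hmb ↦ hab (funext fun q ↦ ?_)
    refine hinj q q.2 (Fintype.mem_piFinset.1 ha q) (Fintype.mem_piFinset.1 hb q) ?_
    refine Nat.ModEq.add_left_cancel' m ?_
    exact (Nat.modEq_zero_iff_dvd.2 ((mem_filter.1 hma).2 q)).trans
      (Nat.modEq_zero_iff_dvd.2 ((mem_filter.1 hmb).2 q)).symm

lemma abs_card_filter_exists_dvd_sub_le {E T : Finset ℕ} (hT : ∀ q ∈ T, q.Prime)
    (hinj : ∀ q ∈ T, Set.InjOn (· % q) (E : Set ℕ)) (N : ℕ) :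
    |(#{m ∈ range N | ∀ q ∈ T, ∃ h ∈ E, q ∣ m + h} : ℝ) - N * ∏ q ∈ T, (#E : ℝ) / q| ≤
      (#E : ℝ) ^ #T := by
  have card_pi : #(Fintype.piFinset fun _ : T ↦ E) = #E ^ #T := by simp
  have main_eq : N * ∏ q ∈ T, (#E : ℝ) / q =
      ∑ _a ∈ Fintype.piFinset fun _ : T ↦ E, N / ∏ q ∈ T, (q : ℝ) := by
    rw [sum_const, card_pi, prod_div_distrib, prod_const, nsmul_eq_mul]
    push_cast
    ring
  rw [card_filter_exists_dvd_eq_sum hinj, main_eq, Nat.cast_sum, ← sum_sub_distrib]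
  refine (abs_sum_le_sum_abs _ _).trans
    ((sum_le_sum fun _ _ ↦ abs_card_filter_forall_dvd_sub_le hT _ N).trans ?_)
  simp

theorem brun_sieve {E P : Finset ℕ} (hP : ∀ q ∈ P, q.Prime)
    (hinj : ∀ q ∈ P, Set.InjOn (· % q) (E : Set ℕ)) {Z : ℝ} (hZ : 1 ≤ Z) (hPZ : (#P : ℝ) ≤ Z)
    {R : ℕ} (hR : Even R) (N : ℕ) :
    (#{m ∈ range N | ∀ q ∈ P, ∀ h ∈ E, ¬ q ∣ m + h} : ℝ) ≤
      N * (Real.exp (-∑ q ∈ P, (#E : ℝ) / q) +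
        Real.exp (-R + Real.exp 1 * ∑ q ∈ P, (#E : ℝ) / q)) + Z ^ R * Real.exp #E := by
  have card_le {q : ℕ} (hq : q ∈ P) : #E ≤ q := by
    simpa using card_le_card_of_injOn (t := range q) (· % q)
      (fun h _ ↦ by simpa using Nat.mod_lt h (hP q hq).pos) (hinj q hq)
  have term_le {T : Finset ℕ} (hT : T ⊆ P) :
      (-1) ^ #T * (#{m ∈ range N | ∀ q ∈ T, ∃ h ∈ E, q ∣ m + h} : ℝ) ≤
        N * ((-1) ^ #T * ∏ q ∈ T, (#E : ℝ) / q) + (#E : ℝ) ^ #T := by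
    have hcount := abs_le.1 (abs_card_filter_exists_dvd_sub_le (fun q hq ↦ hP q (hT hq))
      (fun q hq ↦ hinj q (hT hq)) N)
    rcases neg_one_pow_eq_or ℝ #T with h | h <;> rw [h] <;> linarith
  calc (#{m ∈ range N | ∀ q ∈ P, ∀ h ∈ E, ¬ q ∣ m + h} : ℝ)
      ≤ ∑ T ∈ P.powerset with #T ≤ R,
          (-1) ^ #T * (#{m ∈ range N | ∀ q ∈ T, ∃ h ∈ E, q ∣ m + h} : ℝ) := by
        simpa only [not_exists, not_and] using
          card_filter_forall_not_le (range N) P (fun q m ↦ ∃ h ∈ E, q ∣ m + h) hR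
    _ ≤ ∑ T ∈ P.powerset with #T ≤ R,
          (N * ((-1) ^ #T * ∏ q ∈ T, (#E : ℝ) / q) + (#E : ℝ) ^ #T) :=
        sum_le_sum fun T hT ↦ term_le (mem_powerset.1 (mem_filter.1 hT).1)
    _ ≤ _ := by
        rw [sum_add_distrib, ← mul_sum]
        gcongr
        · exact truncated_sum_prod_le (fun q _ ↦ by positivity)
            (fun q hq ↦ div_le_one_of_le₀ (mod_cast card_le hq) q.cast_nonneg) R
        · exact truncated_sum_pow_card_le (#E).cast_nonneg hZ hPZ R

lemma primePi_le_add_card_sifted (x : ℝ) (E : Finset ℕ) {P : Finset ℕ} {z : ℕ}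
    (hP : P ⊆ Nat.primesLE z) :
    primePi x E ≤ z + #{m ∈ range (⌊x⌋₊ + 1) | ∀ q ∈ P, ∀ h ∈ E, ¬ q ∣ m + h} := by
  have h_sub : {m : ℕ | 0 < m ∧ (m : ℝ) ≤ x ∧ ∀ d ∈ E, (m + d).Prime} ⊆
      ↑(Icc 1 z ∪ {m ∈ range (⌊x⌋₊ + 1) | ∀ q ∈ P, ∀ h ∈ E, ¬ q ∣ m + h}) := by
    rintro m ⟨hm₀, hmx, hm⟩
    rw [mem_coe, mem_union, mem_Icc, mem_filter, mem_range_succ_iff]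
    refine (le_or_gt m z).imp (fun hmz ↦ ⟨hm₀, hmz⟩) fun hzm ↦ ⟨Nat.le_floor hmx, ?_⟩
    intro q hq h hh hdvd
    obtain ⟨hqz, hq_prime⟩ := Nat.mem_primesLE.1 (hP hq)
    have := (Nat.prime_dvd_prime_iff_eq hq_prime (hm h hh)).1 hdvd
    lia
  refine (Set.ncard_le_ncard h_sub (finite_toSet _)).trans ?_
  rw [Set.ncard_coe_finset]
  exact (card_union_le _ _).trans_eq (by rw [Nat.card_Icc, Nat.add_sub_cancel])

lemma exists_sifting_primes {E : Finset ℕ} {A : ℝ} (hE : ∀ h ∈ E, (h : ℝ) ≤ A) (hA : 1 ≤ A)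
    (hEA : 1 ≤ 2 * (#E : ℝ) ^ 2 * Real.log A) {z : ℕ} (hz : 2 ≤ z) {c : ℝ} (hc₀ : 0 ≤ c)
    (hc : c ≤ Real.log (Real.log z) - 3 - Real.log (2 * (#E : ℝ) ^ 2 * Real.log A)) :
    ∃ P ⊆ Nat.primesLE z, (∀ q ∈ P, Set.InjOn (· % q) (E : Set ℕ)) ∧
      ∑ q ∈ P, 1 / (q : ℝ) ∈ Set.Icc (c - 1) c := by
  set Δ := diffProd E
  have hΔ : Δ ≠ 0 := diffProd_ne_zero E
  have card_le : (#Δ.primeFactors : ℝ) ≤ 2 * (#E : ℝ) ^ 2 * Real.log A := by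
    linarith [card_primeFactors_le_two_mul_log hΔ, log_diffProd_le hA hE]
  have bad_sum_le := sum_inv_le_one_add_log
    (fun q hq ↦ (Nat.prime_of_mem_primeFactors hq).pos) hEA card_le
  have c_le : c ≤ ∑ q ∈ Nat.primesLE z \ Δ.primeFactors, 1 / (q : ℝ) := by
    have total_le : ∑ q ∈ Nat.primesLE z, 1 / (q : ℝ) ≤
        ∑ q ∈ Nat.primesLE z \ Δ.primeFactors, 1 / (q : ℝ) + ∑ q ∈ Δ.primeFactors, 1 / (q : ℝ) := by
      rw [← sum_union sdiff_disjoint, sdiff_union_self_eq_union]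
      exact sum_le_sum_of_subset_of_nonneg subset_union_left fun _ _ _ ↦ by positivity
    linarith [log_log_sub_two_le_sum_primesLE hz]
  obtain ⟨P, hP, hPc⟩ := exists_subset_sum_mem_Icc
    (fun q _ ↦ by simpa using Nat.cast_inv_le_one q) hc₀ c_le
  refine ⟨P, hP.trans sdiff_subset, fun q hq ↦ ?_, hPc⟩
  obtain ⟨hqz, hqΔ⟩ := mem_sdiff.1 (hP hq)
  exact injOn_mod_of_not_dvd_diffProd fun hdvd ↦
    hqΔ (Nat.mem_primeFactors.2 ⟨Nat.prime_of_mem_primesLE hqz, hdvd, hΔ⟩)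

lemma primePi_le_of_sieve_params {E : Finset ℕ} {A : ℝ} (hE : ∀ h ∈ E, (h : ℝ) ≤ A) (hA : 1 ≤ A)
    (hEA : 1 ≤ 2 * (#E : ℝ) ^ 2 * Real.log A) {z : ℕ} (hz : 2 ≤ z) {c : ℝ} (hc₀ : 0 ≤ c)
    (hc : c ≤ Real.log (Real.log z) - 3 - Real.log (2 * (#E : ℝ) ^ 2 * Real.log A))
    {R : ℕ} (hR : Even R) {x : ℝ} (hx : 1 ≤ x) :
    (primePi x E : ℝ) ≤ z + (2 * x * (Real.exp (-(#E * (c - 1))) +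
      Real.exp (-R + Real.exp 1 * (#E * c))) + (z : ℝ) ^ R * Real.exp #E) := by
  obtain ⟨P, hP, hinj, hc_le, hle_c⟩ := exists_sifting_primes hE hA hEA hz hc₀ hc
  have card_P_le : #P ≤ z := by
    have h_sub : P ⊆ Icc 1 z := fun q hq ↦ mem_Icc.2
      ⟨(Nat.one_lt_of_mem_primesLE (hP hq)).le, Nat.le_of_mem_primesLE (hP hq)⟩
    simpa using card_le_card h_sub
  have brun := brun_sieve (fun q hq ↦ Nat.prime_of_mem_primesLE (hP hq)) hinj
    (mod_cast one_le_two.trans hz) (Nat.cast_le.2 card_P_le) hR (⌊x⌋₊ + 1)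
  have sum_eq : ∑ q ∈ P, (#E : ℝ) / q = #E * ∑ q ∈ P, 1 / (q : ℝ) := by
    simp only [mul_sum, mul_one_div]
  have N_le : ((⌊x⌋₊ + 1 : ℕ) : ℝ) ≤ 2 * x := by
    push_cast
    linarith [Nat.floor_le (zero_le_one.trans hx)]
  calc (primePi x E : ℝ)
      ≤ z + #{m ∈ range (⌊x⌋₊ + 1) | ∀ q ∈ P, ∀ h ∈ E, ¬ q ∣ m + h} :=
        mod_cast primePi_le_add_card_sifted x E hP
    _ ≤ _ := by
        rw [sum_eq] at brun
        refine add_le_add_right (brun.trans ?_) _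
        gcongr

lemma eventually_const_mul_pow_le_exp (C : ℝ) (n : ℕ) :
    ∀ᶠ l : ℝ in atTop, C * l ^ n ≤ Real.exp l := by
  filter_upwards [(Real.tendsto_exp_div_pow_atTop n).eventually_ge_atTop C,
    eventually_gt_atTop 0] with l hl hl₀
  exact (le_div_iff₀ (by positivity)).1 hl

lemma eventually_log_le_const_mul {c : ℝ} (hc : 0 < c) :
    ∀ᶠ l : ℝ in atTop, Real.log l ≤ c * l := by
  filter_upwards [Real.isLittleO_log_id_atTop.bound hc, eventually_ge_atTop 0] with l hl hl₀
  simpa [abs_of_nonneg hl₀] using (le_abs_self _).trans hl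

/-- The sifting range of Brun's sieve, for `l = log log x`. -/
noncomputable def siftingLevel (l : ℝ) : ℕ := ⌊Real.exp (Real.exp l / l ^ 2)⌋₊

/-- The (even) truncation order of Brun's sieve, for tuples of `κ` elements and `l = log log x`. -/
noncomputable def siftingOrder (κ : ℕ) (l : ℝ) : ℕ := 2 * ⌈2 * κ * l⌉₊

lemma le_log_siftingLevel {l : ℝ} (hl : 0 < l) (hl₂ : 2 * l ^ 2 ≤ Real.exp l) :
    Real.exp l / (2 * l ^ 2) ≤ Real.log (siftingLevel l) := by
  set v := Real.exp l / (2 * l ^ 2) with hv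
  have v_ge : 1 ≤ v := by rwa [hv, one_le_div (by positivity)]
  have level_gt : Real.exp (2 * v) - 1 < siftingLevel l := by
    have hv₂ : 2 * v = Real.exp l / l ^ 2 := by
      rw [hv]
      field_simp
    rw [hv₂]
    exact Nat.sub_one_lt_floor _
  have exp_v_ge : 2 ≤ Real.exp v := by linarith [Real.add_one_le_exp v]
  have exp_v_le : Real.exp v ≤ siftingLevel l := by
    rw [two_mul, Real.exp_add] at level_gt
    nlinarith
  exact (Real.le_log_iff_exp_le (by linarith)).2 exp_v_le

lemma eventually_le_log_log_siftingLevel {κ : ℕ} (hκ : 1 ≤ κ) :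
    ∀ᶠ l : ℝ in atTop, 2 ≤ siftingLevel l ∧ l - l / (8 * κ) + 1 ≤
      Real.log (Real.log (siftingLevel l)) - 3 - Real.log (2 * (κ : ℝ) ^ 2 * l) := by
  have : (0 : ℝ) < κ := mod_cast hκ
  filter_upwards [eventually_const_mul_pow_le_exp 2 2, eventually_gt_atTop 0,
    eventually_log_le_const_mul (c := 1 / (48 * κ)) (by positivity),
    eventually_ge_atTop ((4 + Real.log 2 + Real.log (2 * (κ : ℝ) ^ 2)) * (16 * κ))]
    with l h_exp hl₀ h_log h_const
  have log_level := le_log_siftingLevel hl₀ h_exp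
  have level_pos : 1 ≤ Real.exp l / (2 * l ^ 2) := by rwa [one_le_div (by positivity)]
  have level_gt : (1 : ℝ) < siftingLevel l := by
    by_contra! hle
    linarith [Real.log_nonpos (Nat.cast_nonneg _) hle]
  refine ⟨mod_cast level_gt, ?_⟩
  have log_log_level :
      l - (Real.log 2 + 2 * Real.log l) ≤ Real.log (Real.log (siftingLevel l)) := by
    refine le_trans (le_of_eq ?_) (Real.log_le_log (by positivity) log_level)
    rw [Real.log_div (by positivity) (by positivity), Real.log_exp,
      Real.log_mul (by positivity) (by positivity), Real.log_pow, Nat.cast_ofNat]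
  rw [Real.log_mul (by positivity) (by positivity)]
  have h_log' : 3 * Real.log l ≤ l / (16 * κ) := by
    calc 3 * Real.log l ≤ 3 * (1 / (48 * κ) * l) := by gcongr
      _ = l / (16 * κ) := by field_simp; norm_num
  rw [← le_div_iff₀ (by positivity)] at h_const
  have h_split : l / (8 * κ) = l / (16 * κ) + l / (16 * κ) := by field_simp; norm_num
  linarith

lemma siftingOrder_bounds {κ : ℕ} {l : ℝ} (hl : 0 ≤ l) :
    4 * κ * l ≤ siftingOrder κ l ∧ (siftingOrder κ l : ℝ) ≤ 4 * κ * l + 2 := by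
  have h_nonneg : 0 ≤ 2 * κ * l := by positivity
  rw [siftingOrder, Nat.cast_mul, Nat.cast_ofNat]
  constructor
  · linarith [Nat.le_ceil (2 * κ * l)]
  · linarith [Nat.ceil_lt_add_one h_nonneg]

lemma eventually_sieve_error_le {κ : ℕ} (hκ : 1 ≤ κ) :
    ∀ᶠ l : ℝ in atTop,
      (siftingLevel l : ℝ) + (siftingLevel l : ℝ) ^ siftingOrder κ l * Real.exp κ ≤
        2 * Real.exp (Real.exp l - κ * l) := by
  have hκ₁ : (1 : ℝ) ≤ κ := mod_cast hκ
  filter_upwards [eventually_const_mul_pow_le_exp (4 * κ) 1,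
    eventually_ge_atTop (24 * (κ : ℝ))] with l h_exp hl
  rw [pow_one] at h_exp
  have : 24 ≤ l := by linarith
  have hl₀ : 0 < l := by linarith
  have level_le : (siftingLevel l : ℝ) ≤ Real.exp (Real.exp l / l ^ 2) :=
    Nat.floor_le (Real.exp_pos _).le
  have order_le : (siftingOrder κ l : ℝ) ≤ 6 * κ * l := by
    nlinarith [(siftingOrder_bounds (κ := κ) hl₀.le).2]
  have level_pow_le : (siftingLevel l : ℝ) ^ siftingOrder κ l ≤ Real.exp (Real.exp l / 4) := by
    refine (pow_le_pow_left₀ (Nat.cast_nonneg _) level_le _).trans ?_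
    rw [← Real.exp_nat_mul]
    refine Real.exp_le_exp.2 ?_
    calc siftingOrder κ l * (Real.exp l / l ^ 2) ≤ 6 * κ * l * (Real.exp l / l ^ 2) := by gcongr
      _ = 6 * κ / l * Real.exp l := by field_simp
      _ ≤ 1 / 4 * Real.exp l := by
        refine mul_le_mul_of_nonneg_right ?_ (Real.exp_pos l).le
        rw [div_le_div_iff₀ hl₀ (by norm_num)]
        linarith
      _ = Real.exp l / 4 := by ring
  have exponent_le : Real.exp l / 4 + κ ≤ Real.exp l - κ * l := by nlinarith
  have level_exponent_le : Real.exp l / l ^ 2 ≤ Real.exp l / 4 := by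
    gcongr
    nlinarith
  calc (siftingLevel l : ℝ) + (siftingLevel l : ℝ) ^ siftingOrder κ l * Real.exp κ
      ≤ Real.exp (Real.exp l / 4 + κ) + Real.exp (Real.exp l / 4) * Real.exp κ := by
        gcongr
        exact level_le.trans (Real.exp_le_exp.2 (by linarith))
    _ ≤ 2 * Real.exp (Real.exp l - κ * l) := by
        rw [← Real.exp_add, ← two_mul]
        gcongr

lemma sieve_density_le {κ : ℕ} (hκ : 1 ≤ κ) {l : ℝ} (hl : 8 * κ ≤ l) :
    Real.exp (-(κ * (l - l / (8 * κ) + 1 - 1))) +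
      Real.exp (-siftingOrder κ l + Real.exp 1 * (κ * (l - l / (8 * κ) + 1))) ≤
        Real.exp (-(κ * l)) * (Real.exp (l / 8) + 1) := by
  have hκ₀ : (0 : ℝ) < κ := mod_cast hκ
  rw [mul_add (Real.exp _), ← Real.exp_add, mul_one]
  have hl₀ : 0 < l := by linarith
  refine add_le_add (Real.exp_le_exp.2 (le_of_eq ?_)) (Real.exp_le_exp.2 ?_)
  · field_simp
    ring
  · have c_le : l - l / (8 * κ) + 1 ≤ l := by linarith [(one_le_div (by positivity)).2 hl]
    have c_nonneg : 0 ≤ l - l / (8 * κ) + 1 := by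
      have : (1 : ℝ) ≤ κ := mod_cast hκ
      linarith [div_le_self hl₀.le (by linarith : 1 ≤ 8 * (κ : ℝ))]
    have : Real.exp 1 * (κ * (l - l / (8 * κ) + 1)) ≤ 3 * (κ * l) := by
      gcongr
      exact Real.exp_one_lt_three.le
    linarith [(siftingOrder_bounds (κ := κ) hl₀.le).1]

theorem eventually_primePi_le {κ : ℕ} (hκ : 1 ≤ κ) :
    ∀ᶠ x : ℝ in atTop, ∀ E : Finset ℕ, #E = κ → (∀ h ∈ E, (h : ℝ) ≤ Real.log x) →
      (primePi x E : ℝ) ≤ x * Real.exp (-(κ - 1 / 4) * Real.log (Real.log x)) := by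
  have hκ₁ : (1 : ℝ) ≤ κ := mod_cast hκ
  have h_params := ((eventually_le_log_log_siftingLevel hκ).and
    (eventually_sieve_error_le hκ)).and (eventually_ge_atTop (24 * (κ : ℝ)))
  filter_upwards [(Real.tendsto_log_atTop.comp Real.tendsto_log_atTop).eventually h_params,
    Real.tendsto_log_atTop.eventually_ge_atTop 1, eventually_ge_atTop 1]
    with x ⟨⟨⟨h_level, h_density⟩, h_error⟩, hl⟩ hL hx E hE hEL
  simp only [Function.comp_apply] at h_level h_density h_error hl
  set l := Real.log (Real.log x)
  have exp_l : Real.exp l = Real.log x := Real.exp_log (by linarith)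
  have : 24 ≤ l := by linarith
  have h_sieve := primePi_le_of_sieve_params (c := l - l / (8 * κ) + 1)
    (R := siftingOrder κ l) hEL hL
    (by rw [hE]; nlinarith) h_level
    (by have : l / (8 * κ) ≤ l := div_le_self (by linarith) (by linarith)
        linarith) (by rwa [hE]) (even_two_mul _) hx
  rw [hE] at h_sieve
  have h_split : x * Real.exp (-(κ - 1 / 4) * l) =
      x * Real.exp (-(κ * l)) * (Real.exp (l / 8) * Real.exp (l / 8)) := by
    rw [mul_assoc, ← Real.exp_add, ← Real.exp_add]
    ring_nf
  have error_eq : Real.exp (Real.exp l - κ * l) = x * Real.exp (-(κ * l)) := by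
    rw [exp_l, sub_eq_add_neg, Real.exp_add, Real.exp_log (by linarith)]
  have density := sieve_density_le hκ (by linarith : 8 * κ ≤ l)
  have g_ge : 4 ≤ Real.exp (l / 8) := by linarith [Real.add_one_le_exp (l / 8)]
  calc (primePi x E : ℝ)
      ≤ 2 * x * (Real.exp (-(κ * l)) * (Real.exp (l / 8) + 1)) + 2 * (x * Real.exp (-(κ * l))) := by
        have := mul_le_mul_of_nonneg_left density (by linarith : 0 ≤ 2 * x)
        linarith
    _ = x * Real.exp (-(κ * l)) * (2 * Real.exp (l / 8) + 4) := by ring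
    _ ≤ _ := by
        rw [h_split]
        gcongr
        nlinarith

/-! ### Singular series -/

/-- The Euler factor at `q` of the singular series of `D`. -/
noncomputable def localFactor (D : Finset ℕ) (q : ℕ) : ℝ :=
  ((1 - 1 / (q : ℝ)) ^ #D)⁻¹ * (1 - (nu D q : ℝ) / q)

lemma nu_le {D : Finset ℕ} {q : ℕ} (hq : 0 < q) : nu D q ≤ q := by
  have : D.image (· % q) ⊆ range q :=
    image_subset_iff.2 fun _ _ ↦ mem_range.2 (Nat.mod_lt _ hq)
  exact (card_le_card this).trans (card_range q).le

lemma nu_div_le_one (D : Finset ℕ) {q : ℕ} (hq : 1 < q) : (nu D q : ℝ) / q ≤ 1 :=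
  div_le_one_of_le₀ (mod_cast nu_le (by lia)) q.cast_nonneg

lemma localFactor_nonneg (D : Finset ℕ) {q : ℕ} (hq : 1 < q) : 0 ≤ localFactor D q :=
  mul_nonneg (inv_nonneg.2 (pow_nonneg (one_sub_one_div_pos hq).le _))
    (sub_nonneg.2 (nu_div_le_one D hq))

lemma localFactor_pos {D : Finset ℕ} {q : ℕ} (hq : 1 < q) (h : nu D q ≠ q) :
    0 < localFactor D q := by
  have nu_lt : (nu D q : ℝ) < q := mod_cast (nu_le (by lia)).lt_of_ne h
  exact mul_pos (inv_pos.2 (pow_pos (one_sub_one_div_pos hq) _))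
    (sub_pos.2 ((div_lt_one (by positivity)).2 nu_lt))

lemma localFactor_le_one {D : Finset ℕ} {q : ℕ} (hq : 1 < q) (h : nu D q = #D) :
    localFactor D q ≤ 1 := by
  have hq₀ := one_sub_one_div_pos hq
  rw [localFactor, h, inv_mul_le_iff₀ (by positivity), mul_one]
  calc 1 - (#D : ℝ) / q = 1 + #D * -(1 / (q : ℝ)) := by ring
    _ ≤ (1 + -(1 / (q : ℝ))) ^ #D := one_add_mul_le_pow (by linarith) _
    _ = (1 - 1 / (q : ℝ)) ^ #D := by rw [← sub_eq_add_neg]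

lemma one_sub_le_localFactor {D : Finset ℕ} {q : ℕ} (hq : 1 < q) (h : nu D q = #D) :
    1 - (#D : ℝ) ^ 2 / (q : ℝ) ^ 2 ≤ localFactor D q := by
  have hq₀ := one_sub_one_div_pos hq
  have hq_inv : 0 ≤ 1 / (q : ℝ) := by positivity
  have one_add_le : 1 + 1 / (q : ℝ) ≤ (1 - 1 / (q : ℝ))⁻¹ := by
    rw [le_inv_comm₀ (by positivity) hq₀, inv_eq_one_div, le_div_iff₀ (by positivity)]
    nlinarith
  have bernoulli : 1 + (#D : ℝ) / q ≤ ((1 - 1 / (q : ℝ)) ^ #D)⁻¹ :=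
    calc 1 + (#D : ℝ) / q = 1 + #D * (1 / (q : ℝ)) := by ring
      _ ≤ (1 + 1 / (q : ℝ)) ^ #D := one_add_mul_le_pow (by linarith) _
      _ ≤ (1 - 1 / (q : ℝ))⁻¹ ^ #D := by gcongr
      _ = _ := inv_pow _ _
  have nu_le_one := nu_div_le_one D hq
  rw [localFactor, h] at *
  calc 1 - (#D : ℝ) ^ 2 / (q : ℝ) ^ 2 = (1 + (#D : ℝ) / q) * (1 - (#D : ℝ) / q) := by ring
    _ ≤ _ := mul_le_mul_of_nonneg_right bernoulli (sub_nonneg.2 nu_le_one)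

lemma nu_eq_card_of_sup_lt {D : Finset ℕ} {q : ℕ} (h : D.sup id < q) : nu D q = #D := by
  refine nu_eq_card fun a ha b hb hab ↦ ?_
  have mod_eq {c : ℕ} (hc : c ∈ D) : c % q = c :=
    Nat.mod_eq_of_lt ((le_sup (f := id) hc).trans_lt h)
  simpa only [mod_eq ha, mod_eq hb] using hab

lemma multipliable_localFactor (D : Finset ℕ) :
    Multipliable fun n : ℕ ↦ if n.Prime then localFactor D n else 1 := by
  have : (fun n : ℕ ↦ if n.Prime then localFactor D n else 1) =
      fun n : ℕ ↦ 1 + if n.Prime then localFactor D n - 1 else 0 := by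
    funext n
    split_ifs <;> ring
  rw [this]
  refine multipliable_one_add_of_summable ?_
  have h_summable : Summable fun n : ℕ ↦ (#D : ℝ) ^ 2 * ((n : ℝ) ^ 2)⁻¹ :=
    (Real.summable_nat_pow_inv.2 one_lt_two).mul_left _
  refine Summable.of_norm_bounded_eventually_nat h_summable ?_
  filter_upwards [eventually_gt_atTop (D.sup id)] with n hn
  rw [norm_norm]
  split_ifs with hp
  · have h_nu := nu_eq_card_of_sup_lt hn
    have h_lower := one_sub_le_localFactor hp.one_lt h_nu
    have h_upper := localFactor_le_one hp.one_lt h_nu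
    rw [Real.norm_eq_abs, abs_of_nonpos (by linarith), ← div_eq_mul_inv]
    linarith
  · rw [norm_zero]
    positivity

theorem tendsto_prod_localFactor (D : Finset ℕ) :
    Tendsto (fun n ↦ ∏ q ∈ Nat.primesLE n, localFactor D q) atTop
      (nhds (singSeries D)) := by
  have h_eq : singSeries D = ∏' n : ℕ, if n.Prime then localFactor D n else 1 :=
    Nat.Primes.tprod_eq_tprod_ite (localFactor D)
  have h_tendsto := (multipliable_localFactor D).hasProd.tendsto_prod_nat
  rw [← h_eq] at h_tendsto
  refine (h_tendsto.comp (tendsto_add_atTop_nat 1)).congr fun n ↦ ?_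
  rw [Function.comp_apply, ← prod_filter, Nat.primesLE_eq_filter_range]

lemma one_sub_sum_le_prod {ι : Type*} {s : Finset ι} {f : ι → ℝ} (hf₀ : ∀ i ∈ s, 0 ≤ f i)
    (hf₁ : ∀ i ∈ s, f i ≤ 1) : 1 - ∑ i ∈ s, (1 - f i) ≤ ∏ i ∈ s, f i := by
  classical
  induction s using Finset.induction_on with
  | empty => simp
  | insert a s ha ih =>
    rw [sum_insert ha, prod_insert ha]
    have hs₀ : ∀ i ∈ s, 0 ≤ f i := fun i hi ↦ hf₀ i (mem_insert_of_mem hi)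
    have hs₁ : ∀ i ∈ s, f i ≤ 1 := fun i hi ↦ hf₁ i (mem_insert_of_mem hi)
    have := mul_nonneg (sub_nonneg.2 (hf₁ a (mem_insert_self a s)))
      (sub_nonneg.2 (prod_le_one hs₀ hs₁))
    linarith [ih hs₀ hs₁]

lemma mem_primesLE_sdiff {Y n q : ℕ} :
    q ∈ Nat.primesLE n \ Nat.primesLE Y ↔ q.Prime ∧ Y < q ∧ q ≤ n := by
  rw [Finset.mem_sdiff, Nat.mem_primesLE, Nat.mem_primesLE]
  grind

lemma prod_localFactor_mul_le_singSeries {D : Finset ℕ} {Y : ℕ} (hY : Y ≠ 0)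
    (h : ∀ q : ℕ, q.Prime → Y < q → nu D q = #D) :
    (∏ q ∈ Nat.primesLE Y, localFactor D q) * (1 - (#D : ℝ) ^ 2 / Y) ≤ singSeries D := by
  refine ge_of_tendsto (tendsto_prod_localFactor D) ?_
  filter_upwards [eventually_ge_atTop Y] with n hn
  rw [← prod_sdiff (Nat.primesLE_mono hn), mul_comm]
  refine mul_le_mul_of_nonneg_right ?_
    (prod_nonneg fun q hq ↦ localFactor_nonneg D (Nat.one_lt_of_mem_primesLE hq))
  have nu_eq {q : ℕ} (hq : q ∈ Nat.primesLE n \ Nat.primesLE Y) : 1 < q ∧ nu D q = #D :=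
    have hq' := mem_primesLE_sdiff.1 hq
    ⟨hq'.1.one_lt, h q hq'.1 hq'.2.1⟩
  refine le_trans ?_ (one_sub_sum_le_prod
    (fun q hq ↦ localFactor_nonneg D (nu_eq hq).1)
    fun q hq ↦ localFactor_le_one (nu_eq hq).1 (nu_eq hq).2)
  gcongr 1 - ?_
  calc ∑ q ∈ Nat.primesLE n \ Nat.primesLE Y, (1 - localFactor D q)
      ≤ ∑ q ∈ Nat.primesLE n \ Nat.primesLE Y, (#D : ℝ) ^ 2 * ((q : ℝ) ^ 2)⁻¹ := by
        refine sum_le_sum fun q hq ↦ ?_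
        rw [← div_eq_mul_inv]
        linarith [one_sub_le_localFactor (nu_eq hq).1 (nu_eq hq).2]
    _ ≤ ∑ q ∈ Ioc Y n, (#D : ℝ) ^ 2 * ((q : ℝ) ^ 2)⁻¹ :=
        sum_le_sum_of_subset_of_nonneg
          (fun q hq ↦ mem_Ioc.2 (mem_primesLE_sdiff.1 hq).2) fun _ _ _ ↦ by positivity
    _ ≤ (#D : ℝ) ^ 2 * (Y : ℝ)⁻¹ := by
        rw [← mul_sum]
        gcongr
        refine (sum_Ioc_inv_sq_le_sub hY hn).trans (sub_le_self _ (by positivity))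
    _ = (#D : ℝ) ^ 2 / Y := (div_eq_mul_inv _ _).symm

lemma exists_prime_nu_eq_of_singSeries_eq_zero {D : Finset ℕ} (h : singSeries D = 0) :
    ∃ q : ℕ, q.Prime ∧ nu D q = q := by
  by_contra! h_adm
  let Y := D.sup id + #D ^ 2 + 1
  have h_lower := prod_localFactor_mul_le_singSeries (D := D) (Y := Y) (by lia)
    fun q _ hq ↦ nu_eq_card_of_sup_lt (by lia)
  have h_prod : 0 < ∏ q ∈ Nat.primesLE Y, localFactor D q := prod_pos fun q hq ↦
    localFactor_pos (Nat.one_lt_of_mem_primesLE hq) (h_adm q (Nat.prime_of_mem_primesLE hq))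
  have h_tail : 0 < 1 - (#D : ℝ) ^ 2 / Y := by
    rw [sub_pos, div_lt_one (mod_cast (by lia : 0 < Y))]
    exact mod_cast (by lia : #D ^ 2 < Y)
  linarith [mul_pos h_prod h_tail]

lemma localFactor_le_of_le_nu {D : Finset ℕ} {k m q : ℕ} (hD : #D = k + 1) (hq : 1 < q)
    (hm : m ≤ nu D q) :
    localFactor D q ≤ (1 - 1 / (q : ℝ))⁻¹ ^ k * ((1 - 1 / (q : ℝ))⁻¹ * (1 - (m : ℝ) / q)) := by
  have hq₀ := one_sub_one_div_pos hq
  rw [localFactor, hD, ← inv_pow, pow_succ, mul_assoc]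
  gcongr

lemma localFactor_le_pow {D : Finset ℕ} {k q : ℕ} (hD : #D = k + 1) (hq : 1 < q) :
    localFactor D q ≤ (1 - 1 / (q : ℝ))⁻¹ ^ k := by
  have nu_pos : 1 ≤ nu D q := card_pos.2 ((card_pos.1 (by lia)).image _)
  refine (localFactor_le_of_le_nu hD hq nu_pos).trans (le_of_eq ?_)
  rw [Nat.cast_one, inv_mul_cancel₀ (one_sub_one_div_pos hq).ne', mul_one]

lemma localFactor_le_of_two_le_nu {D : Finset ℕ} {k q : ℕ} (hD : #D = k + 1) (hq : 1 < q)
    (h : 2 ≤ nu D q) :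
    localFactor D q ≤ (1 - 1 / ((q : ℝ) - 1)) * (1 - 1 / (q : ℝ))⁻¹ ^ k := by
  refine (localFactor_le_of_le_nu hD hq h).trans (le_of_eq ?_)
  have hq₁ : (q : ℝ) - 1 ≠ 0 := (sub_pos.2 (mod_cast hq)).ne'
  rw [mul_comm]
  congr 1
  push_cast
  field_simp
  ring

lemma prod_localFactor_le {D : Finset ℕ} {k p Y : ℕ} (hD : #D = k + 1) (hp : p.Prime)
    (hpY : p ≤ Y) (h : 2 ≤ nu D p) :
    ∏ q ∈ Nat.primesLE Y, localFactor D q ≤ (1 - 1 / ((p : ℝ) - 1)) * mertensProd Y ^ k := by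
  calc ∏ q ∈ Nat.primesLE Y, localFactor D q
      ≤ ∏ q ∈ Nat.primesLE Y,
          (if q = p then 1 - 1 / ((p : ℝ) - 1) else 1) * (1 - 1 / (q : ℝ))⁻¹ ^ k := by
        refine prod_le_prod (fun q hq ↦
          localFactor_nonneg D (Nat.one_lt_of_mem_primesLE hq)) fun q hq ↦ ?_
        split_ifs with hqp
        · rw [hqp]
          exact localFactor_le_of_two_le_nu hD hp.one_lt h
        · rw [one_mul]
          exact localFactor_le_pow hD (Nat.one_lt_of_mem_primesLE hq)
    _ = _ := by
        rw [prod_mul_distrib, prod_ite_eq', if_pos (Nat.mem_primesLE.2 ⟨hpY, hp⟩), prod_pow,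
          mertensProd]

lemma prod_localFactor_sdiff_le {D : Finset ℕ} {k Y : ℕ} (hD : #D = k + 1) (hY : 2 ≤ Y) (n : ℕ) :
    ∏ q ∈ Nat.primesLE n \ Nat.primesLE Y, localFactor D q ≤
      Real.exp (k * Real.log (diffProd D) / (Y * Real.log Y)) := by
  have hlogY : 0 < Real.log Y := Real.log_pos (mod_cast hY)
  let s := (Nat.primesLE n \ Nat.primesLE Y).filter (· ∣ diffProd D)
  have factor_le_exp {q : ℕ} (hq : 1 < q) (hYq : Y < q) :
      localFactor D q ≤ Real.exp (k / Y) := by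
    have hq₀ := one_sub_one_div_pos hq
    have hYq' : (Y : ℝ) ≤ q - 1 := le_sub_iff_add_le.2 (mod_cast hYq)
    calc localFactor D q ≤ (1 - 1 / (q : ℝ))⁻¹ ^ k := localFactor_le_pow hD hq
      _ ≤ Real.exp (1 / Y) ^ k := by
        gcongr
        refine (inv_one_sub_one_div_le_exp hq).trans (Real.exp_le_exp.2 ?_)
        gcongr
      _ = Real.exp (k / Y) := by rw [← Real.exp_nat_mul, mul_one_div]
  have card_mul_log_le : #s * Real.log Y ≤ Real.log (diffProd D) := by
    have : Y ^ #s ≤ diffProd D := pow_card_le_of_subset_primeFactors (diffProd_ne_zero D)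
      (fun q hq ↦ (mem_filter.1 hq).elim fun hq hqD ↦
        (mem_primesLE_sdiff.1 hq).1.mem_primeFactors hqD (diffProd_ne_zero D))
      fun q hq ↦ (mem_primesLE_sdiff.1 (mem_filter.1 hq).1).2.1.le
    rw [← Real.log_pow]
    exact Real.log_le_log (by positivity) (mod_cast this)
  calc ∏ q ∈ Nat.primesLE n \ Nat.primesLE Y, localFactor D q
      ≤ ∏ q ∈ Nat.primesLE n \ Nat.primesLE Y,
          if q ∣ diffProd D then Real.exp (k / Y) else 1 := by
        refine prod_le_prod (fun q hq ↦
          localFactor_nonneg D (mem_primesLE_sdiff.1 hq).1.one_lt) fun q hq ↦ ?_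
        obtain ⟨hqp, hYq, -⟩ := mem_primesLE_sdiff.1 hq
        split_ifs with hqD
        · exact factor_le_exp hqp.one_lt hYq
        · exact localFactor_le_one hqp.one_lt
            (nu_eq_card (injOn_mod_of_not_dvd_diffProd hqD))
    _ = Real.exp (#s * (k / Y)) := by rw [← prod_filter, prod_const, ← Real.exp_nat_mul]
    _ ≤ _ := by
        refine Real.exp_le_exp.2 ?_
        calc #s * (k / Y : ℝ) = k * (#s * Real.log Y) / (Y * Real.log Y) := by field_simp
          _ ≤ _ := by gcongr

theorem singSeries_le_of_two_le_nu {D : Finset ℕ} {k p Y : ℕ} (hD : #D = k + 1) (hp : p.Prime)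
    (hpY : p ≤ Y) (h : 2 ≤ nu D p) :
    singSeries D ≤ (1 - 1 / ((p : ℝ) - 1)) * mertensProd Y ^ k *
      Real.exp (k * Real.log (diffProd D) / (Y * Real.log Y)) := by
  refine le_of_tendsto (tendsto_prod_localFactor D) ?_
  filter_upwards [eventually_ge_atTop Y] with n hn
  rw [← prod_sdiff (Nat.primesLE_mono hn), mul_comm]
  have h_nonneg (m : ℕ) : 0 ≤ ∏ q ∈ Nat.primesLE m, localFactor D q :=
    prod_nonneg fun q hq ↦ localFactor_nonneg D (Nat.one_lt_of_mem_primesLE hq)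
  exact mul_le_mul (prod_localFactor_le hD hp hpY h)
    (prod_localFactor_sdiff_le hD (hp.two_le.trans hpY) n)
    (prod_nonneg fun q hq ↦ localFactor_nonneg D (mem_primesLE_sdiff.1 hq).1.one_lt)
    ((h_nonneg Y).trans (prod_localFactor_le hD hp hpY h))

/-! ### Runs of consecutive primes -/

lemma nth_prime_strictMono : StrictMono (Nat.nth Nat.Prime) :=
  Nat.nth_strictMono Nat.infinite_setOfPred_prime

/-- The set counted by `primePi`, as a finite set of naturals. -/
def primeTranslates (X : ℕ) (D : Finset ℕ) : Finset ℕ :=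
  {m ∈ Icc 1 X | ∀ d ∈ D, (m + d).Prime}

lemma primePi_eq_card (x : ℝ) (D : Finset ℕ) : primePi x D = #(primeTranslates ⌊x⌋₊ D) := by
  rw [primePi, ← Set.ncard_coe_finset]
  congr 1
  ext m
  simp only [primeTranslates, coe_filter, mem_Icc, Set.mem_ofPred_eq, and_assoc]
  refine and_congr_right fun hm ↦ ?_
  rw [Nat.le_floor_iff' (by lia)]

/-- The differences `p_{n+i} - p_n` for `1 ≤ i ≤ k`, with primes indexed from `p_0 = 2`. -/
noncomputable def primeDiffs (k n : ℕ) : Finset ℕ :=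
  (range k).image fun i ↦ Nat.nth Nat.Prime (n + i + 1) - Nat.nth Nat.Prime n

lemma mem_primeDiffs {k n d : ℕ} :
    d ∈ primeDiffs k n ↔ ∃ j ∈ Ioc n (n + k), Nat.nth Nat.Prime j = Nat.nth Nat.Prime n + d := by
  rw [primeDiffs, mem_image]
  constructor
  · rintro ⟨i, hi, rfl⟩
    have := nth_prime_strictMono (show n < n + i + 1 by lia)
    exact ⟨n + i + 1, by grind, by lia⟩
  · rintro ⟨j, hj, hjd⟩
    obtain ⟨hnj, hjk⟩ := mem_Ioc.1 hj
    refine ⟨j - n - 1, by grind, ?_⟩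
    rw [show n + (j - n - 1) + 1 = j by lia, hjd, Nat.add_sub_cancel_left]

/-- The set counted by `Ncham`, as a finite set of indices. -/
noncomputable def championIndices (X : ℕ) (D : Finset ℕ) : Finset ℕ :=
  {n ∈ range X | Nat.nth Nat.Prime (n + #D) ≤ X ∧ primeDiffs #D n = D}

lemma mem_championIndices {X n : ℕ} {D : Finset ℕ} :
    n ∈ championIndices X D ↔ Nat.nth Nat.Prime (n + #D) ≤ X ∧ primeDiffs #D n = D := by
  rw [championIndices, mem_filter, mem_range, and_iff_right_of_imp]
  rintro ⟨hX, -⟩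
  have := Nat.add_two_le_nth_prime (n + #D)
  lia

lemma Ncham_eq_card (x : ℝ) (D : Finset ℕ) : Ncham x D = #(championIndices ⌊x⌋₊ D) := by
  rw [Ncham, ← Set.ncard_coe_finset (championIndices ⌊x⌋₊ D)]
  refine congrArg Set.ncard (Set.ext fun n ↦ ?_)
  rw [Set.mem_ofPred_eq, mem_coe, mem_championIndices,
    Nat.le_floor_iff' (Nat.prime_nth_prime _).ne_zero]
  rfl

lemma Ncham_le_primePi (x : ℝ) (D : Finset ℕ) : Ncham x D ≤ primePi x (insert 0 D) := by
  rw [Ncham_eq_card, primePi_eq_card]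
  refine card_le_card_of_injOn (Nat.nth Nat.Prime) (fun n hn ↦ ?_)
    nth_prime_strictMono.injective.injOn
  obtain ⟨hnX, hnD⟩ := mem_championIndices.1 hn
  have h_mono := nth_prime_strictMono.monotone (Nat.le_add_right n #D)
  have h_prime := Nat.prime_nth_prime n
  refine mem_filter.2 ⟨mem_Icc.2 ⟨h_prime.one_lt.le, h_mono.trans hnX⟩, ?_⟩
  refine forall_mem_insert _ _ _ |>.2 ⟨h_prime, fun d hd ↦ ?_⟩
  rw [← hnD] at hd
  obtain ⟨j, -, hj⟩ := mem_primeDiffs.1 hd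
  exact hj ▸ Nat.prime_nth_prime j

lemma sum_range_sub_shift {M : Type*} [AddCommGroup M] (f : ℕ → M) (N k : ℕ) :
    ∑ n ∈ range N, (f (n + k) - f n) = ∑ i ∈ range k, (f (N + i) - f i) := by
  have h_split := sum_range_add f N k
  rw [add_comm N k, sum_range_add] at h_split
  simp only [sum_sub_distrib, add_comm _ k]
  rw [sub_eq_sub_iff_add_eq_add, add_comm, h_split, add_comm]

lemma Ncham_mul_le {x : ℝ} (hx : 0 ≤ x) {D : Finset ℕ} {d : ℕ} (hd : d ∈ D) :
    (Ncham x D : ℝ) * d ≤ #D * x := by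
  rw [Ncham_eq_card]
  rcases (championIndices ⌊x⌋₊ D).eq_empty_or_nonempty with h_empty | h_ne
  · rw [h_empty, card_empty, Nat.cast_zero, zero_mul]
    positivity
  obtain ⟨N, hN, hN_max⟩ := exists_max_image _ id h_ne
  let f (n : ℕ) : ℝ := Nat.nth Nat.Prime n
  have f_mono : Monotone f := Nat.mono_cast.comp nth_prime_strictMono.monotone
  have f_le {i : ℕ} (hi : i ∈ range #D) : f (N + 1 + i) ≤ x := by
    refine le_trans (f_mono ?_) (((Nat.le_floor_iff hx).1 (mem_championIndices.1 hN).1))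
    have := mem_range.1 hi
    lia
  calc (#(championIndices ⌊x⌋₊ D) : ℝ) * d = ∑ _n ∈ championIndices ⌊x⌋₊ D, (d : ℝ) := by
        rw [sum_const, nsmul_eq_mul]
    _ ≤ ∑ n ∈ championIndices ⌊x⌋₊ D, (f (n + #D) - f n) := sum_le_sum fun n hn ↦ by
        rw [← (mem_championIndices.1 hn).2] at hd
        obtain ⟨j, hj, hjd⟩ := mem_primeDiffs.1 hd
        have hjd' : f j = f n + d := by rw [← Nat.cast_add, ← hjd]
        linarith [f_mono (mem_Ioc.1 hj).2]
    _ ≤ ∑ n ∈ range (N + 1), (f (n + #D) - f n) :=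
        sum_le_sum_of_subset_of_nonneg (fun n hn ↦ mem_range_succ_iff.2 (hN_max n hn))
          fun n _ _ ↦ sub_nonneg.2 (f_mono (Nat.le_add_right n _))
    _ = ∑ i ∈ range #D, (f (N + 1 + i) - f i) := sum_range_sub_shift f _ _
    _ ≤ ∑ _i ∈ range #D, x := sum_le_sum fun i hi ↦
        (sub_le_self _ (Nat.cast_nonneg _)).trans (f_le hi)
    _ = #D * x := by rw [sum_const, card_range, nsmul_eq_mul]

lemma primePi_le_of_nu_eq {D : Finset ℕ} {q : ℕ} (hq : q.Prime) (h : nu D q = q) (x : ℝ) :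
    primePi x D ≤ q := by
  have image_eq : D.image (· % q) = range q :=
    eq_of_subset_of_card_le (image_subset_iff.2 fun _ _ ↦ mem_range.2 (Nat.mod_lt _ hq.pos))
      ((card_range q).trans h.symm).le
  have exists_dvd_add (m : ℕ) : ∃ d ∈ D, q ∣ m + d := by
    have h_mem : (q - 1) * m % q ∈ D.image (· % q) :=
      image_eq ▸ mem_range.2 (Nat.mod_lt _ hq.pos)
    obtain ⟨d, hd, hmod⟩ := mem_image.1 h_mem
    refine ⟨d, hd, (Nat.ModEq.dvd_iff (Nat.ModEq.add_left m hmod) dvd_rfl).2 ?_⟩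
    rw [Nat.sub_one_mul, Nat.add_sub_cancel' (Nat.le_mul_of_pos_left m hq.pos)]
    exact dvd_mul_right q m
  rw [primePi_eq_card]
  refine (card_le_card (t := Icc 1 q) fun m hm ↦ ?_).trans_eq
    (by rw [Nat.card_Icc, Nat.add_sub_cancel])
  obtain ⟨hm_mem, hm_prime⟩ := mem_filter.1 hm
  obtain ⟨d, hd, hdvd⟩ := exists_dvd_add m
  have := (Nat.prime_dvd_prime_iff_eq hq (hm_prime d hd)).1 hdvd
  exact mem_Icc.2 ⟨(mem_Icc.1 hm_mem).1, by lia⟩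

lemma primeDiffs_count_eq {D : Finset ℕ} {M m : ℕ} (hD : ∀ d ∈ D, 0 < d) (hM : ∀ d ∈ D, d ≤ M)
    (hm : m.Prime) (hmD : ∀ d ∈ D, (m + d).Prime)
    (h_only : ∀ h < M, (m + h).Prime → h ∈ insert 0 D) :
    primeDiffs #D (Nat.count Nat.Prime m) = D := by
  refine (eq_of_subset_of_card_le (fun d hd ↦ mem_primeDiffs.2 ?_) ?_).symm
  · have h_pos := hD d hd
    refine ⟨Nat.count Nat.Prime (m + d), ?_, by rw [Nat.nth_count hm, Nat.nth_count (hmD d hd)]⟩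
    have count_le : Nat.count (fun h ↦ (m + h).Prime) d ≤ #D := by
      rw [Nat.count_eq_card_filter_range]
      refine (card_le_card (t := insert 0 (D.erase d)) fun h hh ↦ ?_).trans ?_
      · obtain ⟨hhd, h_prime⟩ := mem_filter.1 hh
        have := h_only h ((mem_range.1 hhd).trans_le (hM d hd)) h_prime
        grind
      · refine (card_insert_le _ _).trans_eq ?_
        rw [card_erase_add_one hd]
    have one_le_count : 1 ≤ Nat.count (fun h ↦ (m + h).Prime) d := by
      rw [Nat.count_eq_card_filter_range]
      exact card_pos.2 ⟨0, mem_filter.2 ⟨mem_range.2 h_pos, hm⟩⟩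
    rw [Nat.count_add, mem_Ioc]
    lia
  · exact card_image_le.trans (card_range _).le

lemma count_mem_championIndices {D : Finset ℕ} {M X m : ℕ} (hD : ∀ d ∈ D, 0 < d)
    (hM : IsGreatest (D : Set ℕ) M) (hmX : m + M ≤ X) (hm : m.Prime)
    (hmD : ∀ d ∈ D, (m + d).Prime) (h_only : ∀ h < M, (m + h).Prime → h ∈ insert 0 D) :
    Nat.count Nat.Prime m ∈ championIndices X D := by
  have diffs_eq := primeDiffs_count_eq hD hM.2 hm hmD h_only
  refine mem_championIndices.2 ⟨?_, diffs_eq⟩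
  have h_card : 0 < #D := card_pos.2 ⟨M, hM.1⟩
  have h_lt := nth_prime_strictMono (show Nat.count Nat.Prime m < Nat.count Nat.Prime m + #D by lia)
  have last_mem : Nat.nth Nat.Prime (Nat.count Nat.Prime m + #D) - m ∈ D := by
    rw [← diffs_eq, mem_primeDiffs]
    rw [Nat.nth_count hm] at *
    exact ⟨_, mem_Ioc.2 ⟨by lia, le_rfl⟩, by rw [diffs_eq]; lia⟩
  have := hM.2 last_mem
  lia

lemma primePi_le_Ncham_add {D : Finset ℕ} {M : ℕ} (hD : ∀ d ∈ D, 0 < d)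
    (hM : IsGreatest (D : Set ℕ) M) (x : ℝ) :
    primePi x (insert 0 D) ≤ Ncham x D + M +
      ∑ h ∈ range M with h ∉ insert 0 D, primePi x (insert h (insert 0 D)) := by
  simp only [primePi_eq_card, Ncham_eq_card]
  set X := ⌊x⌋₊
  let extra := {h ∈ range M | h ∉ insert 0 D}
  have h_cover : primeTranslates X (insert 0 D) ⊆
      (championIndices X D).image (Nat.nth Nat.Prime) ∪ Ioc (X - M) X ∪
        extra.biUnion fun h ↦ primeTranslates X (insert h (insert 0 D)) := by
    intro m hm
    obtain ⟨hmX, hm_prime⟩ := mem_filter.1 hm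
    obtain ⟨hm₀, hmD⟩ := (forall_mem_insert _ _ _).1 hm_prime
    rw [mem_union, mem_union]
    by_cases h_extra : ∃ h ∈ extra, (m + h).Prime
    · obtain ⟨h, hh, hmh⟩ := h_extra
      exact Or.inr (mem_biUnion.2 ⟨h, hh, mem_filter.2
        ⟨hmX, (forall_mem_insert _ _ _).2 ⟨hmh, hm_prime⟩⟩⟩)
    · refine Or.inl ((le_or_gt (m + M) X).imp (fun hmM ↦ ?_) fun hmM ↦ ?_)
      · refine mem_image.2 ⟨_, count_mem_championIndices hD hM hmM hm₀ hmD ?_, Nat.nth_count hm₀⟩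
        intro h hhM hmh
        by_contra h_notMem
        exact h_extra ⟨h, mem_filter.2 ⟨mem_range.2 hhM, h_notMem⟩, hmh⟩
      · obtain ⟨hm₁, hmX₁⟩ := mem_Icc.1 hmX
        exact mem_Ioc.2 ⟨by lia, hmX₁⟩
  refine (card_le_card h_cover).trans ((card_union_le _ _).trans ?_)
  refine add_le_add ((card_union_le _ _).trans ?_) card_biUnion_le
  refine add_le_add card_image_le ?_
  rw [Nat.card_Ioc]
  lia

/-! ### A competitor built from a primorial -/

/-- The set `{P, 2P, …, kP}`; with `P` a primorial it serves as competitor to a champion. -/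
def multiples (k P : ℕ) : Finset ℕ := (Icc 1 k).image (· * P)

lemma insert_zero_multiples (k P : ℕ) :
    insert 0 (multiples k P) = (range (k + 1)).image (· * P) := by
  ext d
  simp only [multiples, mem_insert, mem_image, mem_Icc, mem_range]
  constructor
  · rintro (rfl | ⟨j, hj, rfl⟩)
    · exact ⟨0, by lia, zero_mul P⟩
    · exact ⟨j, by lia, rfl⟩
  · rintro ⟨j, hj, rfl⟩
    rcases j.eq_zero_or_pos with rfl | hj₀
    · exact Or.inl (zero_mul P)
    · exact Or.inr ⟨j, by lia, rfl⟩

lemma card_multiples (k : ℕ) {P : ℕ} (hP : 0 < P) : #(multiples k P) = k := by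
  rw [multiples, card_image_of_injective _ (mul_left_injective₀ hP.ne'), Nat.card_Icc,
    Nat.add_sub_cancel]

lemma card_insert_zero_multiples (k : ℕ) {P : ℕ} (hP : 0 < P) :
    #(insert 0 (multiples k P)) = k + 1 := by
  rw [insert_zero_multiples, card_image_of_injective _ (mul_left_injective₀ hP.ne'), card_range]

lemma le_of_mem_multiples {k P d : ℕ} (hd : d ∈ multiples k P) : P ≤ d := by
  obtain ⟨j, hj, rfl⟩ := mem_image.1 hd
  exact Nat.le_mul_of_pos_left P (mem_Icc.1 hj).1

lemma isGreatest_multiples {k : ℕ} (hk : 1 ≤ k) (P : ℕ) :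
    IsGreatest (multiples k P : Set ℕ) (k * P) := by
  refine ⟨mem_image.2 ⟨k, mem_Icc.2 ⟨hk, le_rfl⟩, rfl⟩, fun d hd ↦ ?_⟩
  obtain ⟨j, hj, rfl⟩ := mem_image.1 hd
  exact Nat.mul_le_mul_right P (mem_Icc.1 hj).2

lemma nu_insert_zero_multiples_of_dvd (k : ℕ) {P q : ℕ} (h : q ∣ P) :
    nu (insert 0 (multiples k P)) q = 1 := by
  refine card_eq_one.2 ⟨0, eq_singleton_iff_nonempty_unique_mem.2
    ⟨(insert_nonempty _ _).image _, fun r hr ↦ ?_⟩⟩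
  rw [insert_zero_multiples, image_image] at hr
  obtain ⟨j, -, rfl⟩ := mem_image.1 hr
  exact Nat.mod_eq_zero_of_dvd (h.mul_left j)

lemma nu_insert_zero_multiples_of_coprime {k P q : ℕ} (h : q.Coprime P) (hkq : k < q) :
    nu (insert 0 (multiples k P)) q = #(insert 0 (multiples k P)) := by
  refine nu_eq_card fun a ha b hb hab ↦ ?_
  rw [insert_zero_multiples, mem_coe, mem_image] at ha hb
  obtain ⟨i, hi, rfl⟩ := ha
  obtain ⟨j, hj, rfl⟩ := hb
  have hij : i ≡ j [MOD q] := Nat.ModEq.cancel_right_of_coprime h hab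
  rw [hij.eq_of_lt_of_lt (by grind) (by grind)]

lemma coprime_primorial {q Y : ℕ} (hq : q.Prime) (h : Y < q) : q.Coprime (primorial Y) := by
  rwa [hq.coprime_iff_not_dvd, hq.dvd_primorial_iff, not_le]

theorem mertensProd_pow_mul_le_singSeries {k Y : ℕ} (hY : Y ≠ 0) (hkY : k ≤ Y) :
    mertensProd Y ^ k * (1 - ((k : ℝ) + 1) ^ 2 / Y) ≤
      singSeries (insert 0 (multiples k (primorial Y))) := by
  have h_card := card_insert_zero_multiples k (primorial_pos Y)
  have h_lower := prod_localFactor_mul_le_singSeries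
    (D := insert 0 (multiples k (primorial Y))) hY fun q hq hqY ↦
      nu_insert_zero_multiples_of_coprime (coprime_primorial hq hqY) (hkY.trans_lt hqY)
  rw [h_card] at h_lower
  push_cast at h_lower
  refine (le_of_eq ?_).trans h_lower
  rw [mertensProd, ← prod_pow]
  congr 1
  refine prod_congr rfl fun q hq ↦ ?_
  obtain ⟨hqY, hq⟩ := Nat.mem_primesLE.1 hq
  rw [localFactor, h_card, nu_insert_zero_multiples_of_dvd k (hq.dvd_primorial_iff.2 hqY), pow_succ,
    mul_inv, Nat.cast_one, mul_assoc, inv_mul_cancel₀ (one_sub_one_div_pos hq.one_lt).ne', mul_one,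
    inv_pow]

/-- The size `x / (log x) ^ (k + 1)` of the Hardy–Littlewood main term for `k + 1` simultaneous
primes, without its singular series. -/
noncomputable def primeTupleScale (k : ℕ) (x : ℝ) : ℝ := x / Real.log x ^ (k + 1)

/-- The Hardy–Littlewood conjecture for the sets `{0} ∪ D` with `#D = k`, uniformly for
`D ⊆ [2, (log x) ^ (k + 1)]` of nonzero singular series. -/
def UniformHardyLittlewood (k : ℕ) : Prop :=
  ∀ ε : ℝ, 0 < ε → ∀ᶠ x : ℝ in atTop, ∀ D : Finset ℕ, #D = k →
    (∀ d ∈ D, 2 ≤ d ∧ (d : ℝ) ≤ Real.log x ^ (k + 1)) → singSeries (insert 0 D) ≠ 0 →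
      |(primePi x (insert 0 D) : ℝ) - singSeries (insert 0 D) * primeTupleScale k x| ≤
        ε * singSeries (insert 0 D) * primeTupleScale k x

/-- The level `Y` of the primorial whose multiples compete with a champion for `x`. The constant
`1 / 8` makes the primorial at most `(log x) ^ (1 / 4)`. -/
noncomputable def primorialLevel (x : ℝ) : ℕ := ⌊Real.log (Real.log x) / 8⌋₊

/-- The competitor `{P, 2P, …, kP}` of a champion for `x`, with `P` the primorial of level
`primorialLevel x`. -/
noncomputable def competitor (k : ℕ) (x : ℝ) : Finset ℕ :=
  multiples k (primorial (primorialLevel x))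

lemma tendsto_log_log : Tendsto (fun x ↦ Real.log (Real.log x)) atTop atTop :=
  Real.tendsto_log_atTop.comp Real.tendsto_log_atTop

lemma tendsto_primorialLevel : Tendsto primorialLevel atTop atTop :=
  tendsto_nat_floor_atTop.comp (tendsto_log_log.atTop_div_const (by norm_num))

lemma tendsto_log_primorialLevel :
    Tendsto (fun x ↦ Real.log (primorialLevel x)) atTop atTop :=
  Real.tendsto_log_atTop.comp (tendsto_natCast_atTop_atTop.comp tendsto_primorialLevel)

lemma tendsto_mertensProd_pow {k : ℕ} (hk : 1 ≤ k) :
    Tendsto (fun x ↦ mertensProd (primorialLevel x) ^ k) atTop atTop :=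
  (tendsto_pow_atTop (by lia)).comp
    (tendsto_atTop_mono (fun _ ↦ log_le_mertensProd _) tendsto_log_primorialLevel)

lemma eventually_log_le_const_mul_primeTupleScale (k : ℕ) {ε : ℝ} (hε : 0 < ε) :
    ∀ᶠ x in atTop, Real.log x ≤ ε * primeTupleScale k x := by
  filter_upwards [(Real.isLittleO_pow_log_id_atTop (n := k + 2)).bound hε,
    eventually_gt_atTop 1] with x h hx
  have log_pos : 0 < Real.log x := Real.log_pos hx
  have h' : Real.log x ^ (k + 2) ≤ ε * x := by
    simpa [abs_of_pos log_pos, abs_of_pos (zero_lt_one.trans hx)] using h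
  rw [primeTupleScale, ← mul_div_assoc, le_div_iff₀ (by positivity)]
  linarith [pow_succ' (Real.log x) (k + 1)]

lemma primeTupleScale_pos (k : ℕ) {x : ℝ} (hx : 1 < x) : 0 < primeTupleScale k x :=
  div_pos (zero_lt_one.trans hx) (pow_pos (Real.log_pos hx) _)

lemma primeTupleScale_eq (k : ℕ) {x : ℝ} (hx : 1 < x) :
    primeTupleScale k x = x * Real.exp (-(((k : ℝ) + 1) * Real.log (Real.log x))) := by
  rw [primeTupleScale, Real.exp_neg, div_eq_mul_inv]
  nth_rw 1 [← Real.exp_log (Real.log_pos hx)]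
  rw [← Real.exp_nat_mul]
  push_cast
  rfl

lemma primorial_primorialLevel_le {x : ℝ} (hx : 0 ≤ Real.log (Real.log x)) :
    (primorial (primorialLevel x) : ℝ) ≤ Real.exp (Real.log (Real.log x) / 4) := by
  have four_le : (4 : ℝ) ≤ Real.exp 2 := by
    have : Real.exp 2 = Real.exp 1 * Real.exp 1 := by rw [← Real.exp_add, one_add_one_eq_two]
    nlinarith [Real.add_one_le_exp (1 : ℝ)]
  have level_le : (primorialLevel x : ℝ) ≤ Real.log (Real.log x) / 8 :=
    Nat.floor_le (by positivity)
  calc (primorial (primorialLevel x) : ℝ) ≤ 4 ^ primorialLevel x :=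
        mod_cast primorial_le_four_pow _
    _ ≤ Real.exp 2 ^ primorialLevel x := by gcongr
    _ = Real.exp (primorialLevel x * 2) := (Real.exp_nat_mul _ _).symm
    _ ≤ Real.exp (Real.log (Real.log x) / 4) := Real.exp_le_exp.2 (by linarith)

lemma card_competitor (k : ℕ) (x : ℝ) : #(competitor k x) = k :=
  card_multiples k (primorial_pos _)

lemma competitor_pos {k : ℕ} {x : ℝ} {d : ℕ} (hd : d ∈ competitor k x) : 0 < d :=
  (primorial_pos _).trans_le (le_of_mem_multiples hd)

lemma eventually_mul_primorial_le (k : ℕ) {ε : ℝ} (hε : 0 < ε) :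
    ∀ᶠ x in atTop, (k * primorial (primorialLevel x) : ℕ) ≤
      ε * Real.exp (3 / 4 * Real.log (Real.log x)) := by
  have h_exp : Tendsto (fun x ↦ Real.exp (Real.log (Real.log x) / 2)) atTop atTop :=
    Real.tendsto_exp_atTop.comp (tendsto_log_log.atTop_div_const (by norm_num))
  filter_upwards [tendsto_log_log.eventually_ge_atTop 0, h_exp.eventually_ge_atTop (k / ε)]
    with x hx hk
  rw [div_le_iff₀' hε] at hk
  rw [Nat.cast_mul]
  calc (k : ℝ) * primorial (primorialLevel x)
      ≤ ε * Real.exp (Real.log (Real.log x) / 2) * Real.exp (Real.log (Real.log x) / 4) := by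
        gcongr
        exact primorial_primorialLevel_le hx
    _ = ε * Real.exp (3 / 4 * Real.log (Real.log x)) := by
        rw [mul_assoc, ← Real.exp_add]
        ring_nf

lemma eventually_mul_primorial_le_log (k : ℕ) :
    ∀ᶠ x in atTop, (k * primorial (primorialLevel x) : ℕ) ≤ Real.log x := by
  filter_upwards [eventually_mul_primorial_le k one_pos, tendsto_log_log.eventually_ge_atTop 0,
    Real.tendsto_log_atTop.eventually_gt_atTop 0] with x hP hl hL
  rw [one_mul] at hP
  exact hP.trans ((Real.exp_le_exp.2 (by linarith)).trans_eq (Real.exp_log hL))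

lemma eventually_le_log_of_mem_competitor (k : ℕ) :
    ∀ᶠ x in atTop, ∀ d ∈ insert 0 (competitor k x), (d : ℝ) ≤ Real.log x := by
  filter_upwards [eventually_mul_primorial_le_log k] with x hP d hd
  rw [competitor, insert_zero_multiples] at hd
  obtain ⟨j, hj, rfl⟩ := mem_image.1 hd
  have := Nat.mul_le_mul_right (primorial (primorialLevel x)) (mem_range_succ_iff.1 hj)
  exact (Nat.cast_le.2 this).trans hP

lemma eventually_le_singSeries_competitor (k : ℕ) {ε : ℝ} (hε : 0 < ε) :
    ∀ᶠ x in atTop, (1 - ε) * mertensProd (primorialLevel x) ^ k ≤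
      singSeries (insert 0 (competitor k x)) := by
  have h_small := ((tendsto_natCast_atTop_atTop.comp tendsto_primorialLevel).const_div_atTop
    (((k : ℝ) + 1) ^ 2)).eventually (eventually_le_nhds hε)
  filter_upwards [h_small, tendsto_primorialLevel.eventually_ge_atTop (k + 1)] with x hx hk
  have := mertensProd_pos (primorialLevel x)
  calc (1 - ε) * mertensProd (primorialLevel x) ^ k
      = mertensProd (primorialLevel x) ^ k * (1 - ε) := mul_comm _ _
    _ ≤ mertensProd (primorialLevel x) ^ k * (1 - ((k : ℝ) + 1) ^ 2 / primorialLevel x) := by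
        gcongr
        exact hx
    _ ≤ singSeries (insert 0 (competitor k x)) :=
        mertensProd_pow_mul_le_singSeries (by lia) (by lia)

lemma eventually_sum_primePi_insert_le (k : ℕ) {ε : ℝ} (hε : 0 < ε) :
    ∀ᶠ x in atTop, ∑ h ∈ range (k * primorial (primorialLevel x)) with
        h ∉ insert 0 (competitor k x), (primePi x (insert h (insert 0 (competitor k x))) : ℝ) ≤
      ε * primeTupleScale k x := by
  filter_upwards [eventually_primePi_le (κ := k + 2) (by lia), eventually_mul_primorial_le k hε,
    eventually_le_log_of_mem_competitor k, eventually_mul_primorial_le_log k,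
    eventually_gt_atTop 1] with x h_sieve h_mul h_log h_mul_log hx
  set M := k * primorial (primorialLevel x)
  set l := Real.log (Real.log x)
  have scale_eq : primeTupleScale k x = x * Real.exp (-((k + 1) * l)) := primeTupleScale_eq k hx
  have term_le : ∀ h ∈ {h ∈ range M | h ∉ insert 0 (competitor k x)},
      (primePi x (insert h (insert 0 (competitor k x))) : ℝ) ≤
        x * Real.exp (-((k + 2 : ℕ) - 1 / 4) * l) := by
    intro h hh
    obtain ⟨hM, h_notMem⟩ := mem_filter.1 hh
    refine h_sieve _ ?_ (forall_mem_insert _ _ _ |>.2 ⟨?_, h_log⟩)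
    · rw [card_insert_of_notMem h_notMem, competitor,
        card_insert_zero_multiples k (primorial_pos _)]
    · exact (Nat.cast_le.2 (mem_range.1 hM).le).trans h_mul_log
  have card_le : (#{h ∈ range M | h ∉ insert 0 (competitor k x)} : ℝ) ≤ M :=
    mod_cast (card_filter_le _ _).trans_eq (card_range M)
  calc _ ≤ M * (x * Real.exp (-((k + 2 : ℕ) - 1 / 4) * l)) := by
        refine (sum_le_card_nsmul _ _ _ term_le).trans ?_
        rw [nsmul_eq_mul]
        gcongr
    _ ≤ ε * Real.exp (3 / 4 * l) * (x * Real.exp (-((k + 2 : ℕ) - 1 / 4) * l)) := by gcongr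
    _ = ε * primeTupleScale k x := by
        rw [scale_eq, mul_assoc, mul_left_comm (Real.exp _), ← Real.exp_add]
        push_cast
        ring_nf

lemma eventually_primePi_competitor_le {k : ℕ} (hk : 1 ≤ k) {ε : ℝ} (hε : 0 < ε) :
    ∀ᶠ x in atTop, (primePi x (insert 0 (competitor k x)) : ℝ) ≤
      Ncham x (competitor k x) + ε * primeTupleScale k x := by
  filter_upwards [eventually_sum_primePi_insert_le k (half_pos hε),
    eventually_le_log_of_mem_competitor k,
    eventually_log_le_const_mul_primeTupleScale k (half_pos hε)] with x h_sum h_log h_scale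
  have h_greatest := isGreatest_multiples hk (primorial (primorialLevel x))
  have h_le := primePi_le_Ncham_add (D := competitor k x) (fun _ ↦ competitor_pos) h_greatest x
  rw [← Nat.cast_le (α := ℝ)] at h_le
  have := h_log _ (mem_insert_of_mem h_greatest.1)
  push_cast at h_le this
  linarith

theorem eventually_le_Ncham_competitor {k : ℕ} (hk : 1 ≤ k) (HL : UniformHardyLittlewood k)
    {ε : ℝ} (hε : 0 < ε) (hε₁ : ε ≤ 1) :
    ∀ᶠ x in atTop, (1 - ε) * mertensProd (primorialLevel x) ^ k * primeTupleScale k x ≤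
      Ncham x (competitor k x) := by
  have hδ : 0 < ε / 3 := by positivity
  filter_upwards [HL (ε / 3) hδ, eventually_le_singSeries_competitor k hδ,
    eventually_primePi_competitor_le hk hδ, eventually_le_log_of_mem_competitor k,
    tendsto_primorialLevel.eventually_ge_atTop 2,
    (tendsto_mertensProd_pow hk).eventually_ge_atTop 1,
    Real.tendsto_log_atTop.eventually_ge_atTop 1, eventually_gt_atTop 1]
    with x h_HL h_sing h_sieve h_log hY hM hL hx
  set M := mertensProd (primorialLevel x) ^ k
  set S := singSeries (insert 0 (competitor k x))
  set T := primeTupleScale k x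
  have T_pos : 0 < T := primeTupleScale_pos k hx
  have S_pos : 0 < S := lt_of_lt_of_le (by nlinarith) h_sing
  have two_le : 2 ≤ primorial (primorialLevel x) :=
    Nat.le_of_dvd (primorial_pos _) (Nat.prime_two.dvd_primorial_iff.2 hY)
  have h_main := h_HL (competitor k x) (card_competitor k x) (fun d hd ↦
    ⟨two_le.trans (le_of_mem_multiples hd),
      (h_log d (mem_insert_of_mem hd)).trans (le_self_pow₀ hL (by lia))⟩) S_pos.ne'
  have factor_le : 1 - ε ≤ (1 - ε / 3) * (1 - ε / 3) - ε / 3 := by nlinarith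
  calc (1 - ε) * M * T ≤ ((1 - ε / 3) * (1 - ε / 3) - ε / 3) * M * T := by gcongr
    _ = ((1 - ε / 3) * ((1 - ε / 3) * M) - ε / 3 * M) * T := by ring
    _ ≤ ((1 - ε / 3) * S - ε / 3 * 1) * T := by
        gcongr
        linarith
    _ ≤ Ncham x (competitor k x) := by linarith [(abs_le.1 h_main).1]

/-! ### Champions -/

lemma eventually_le_Ncham_of_isChampion {k : ℕ} (hk : 1 ≤ k) (HL : UniformHardyLittlewood k)
    {ε : ℝ} (hε : 0 < ε) (hε₁ : ε ≤ 1) :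
    ∀ᶠ x in atTop, ∀ D, IsChampion k x D →
      (1 - ε) * mertensProd (primorialLevel x) ^ k * primeTupleScale k x ≤ Ncham x D := by
  filter_upwards [eventually_le_Ncham_competitor hk HL hε hε₁] with x hx D hD
  exact hx.trans (mod_cast hD.2.2 _ (card_competitor k x) fun _ ↦ competitor_pos)

lemma Ncham_le_of_log_pow_lt {k : ℕ} {x : ℝ} (hx : 1 < x) {D : Finset ℕ} (hD : #D = k) {d : ℕ}
    (hd : d ∈ D) (hdL : Real.log x ^ (k + 1) < d) : Ncham x D ≤ k * primeTupleScale k x := by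
  have := Real.log_pos hx
  rw [primeTupleScale, ← mul_div_assoc, le_div_iff₀ (by positivity)]
  calc Ncham x D * Real.log x ^ (k + 1) ≤ Ncham x D * d := by gcongr
    _ ≤ k * x := by simpa only [hD] using Ncham_mul_le (zero_le_one.trans hx.le) hd

lemma Ncham_le_of_nu_eq (x : ℝ) {D : Finset ℕ} {q : ℕ} (hq : q.Prime)
    (h : nu (insert 0 D) q = q) : Ncham x D ≤ #D + 1 :=
  calc Ncham x D ≤ q := (Ncham_le_primePi x D).trans (primePi_le_of_nu_eq hq h x)
    _ = nu (insert 0 D) q := h.symm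
    _ ≤ #D + 1 := card_image_le.trans (card_insert_le _ _)

lemma nu_insert_zero_two {D : Finset ℕ} (h : 1 ∈ D) : nu (insert 0 D) 2 = 2 :=
  le_antisymm (nu_le two_pos) (one_lt_card.2 ⟨0, mem_image.2 ⟨0, mem_insert_self _ _, rfl⟩,
    1, mem_image.2 ⟨1, mem_insert_of_mem h, rfl⟩, zero_ne_one⟩)

theorem eventually_admissible_of_isChampion {k : ℕ} (hk : 1 ≤ k) (HL : UniformHardyLittlewood k) :
    ∀ᶠ x in atTop, ∀ D, IsChampion k x D →
      (∀ d ∈ D, 2 ≤ d ∧ (d : ℝ) ≤ Real.log x ^ (k + 1)) ∧ singSeries (insert 0 D) ≠ 0 := by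
  filter_upwards [eventually_le_Ncham_of_isChampion hk HL one_half_pos one_half_lt_one.le,
    (tendsto_mertensProd_pow hk).eventually_gt_atTop (2 * (k + 1)),
    eventually_log_le_const_mul_primeTupleScale k one_pos,
    Real.tendsto_log_atTop.eventually_ge_atTop 1, eventually_gt_atTop 1]
    with x h_champ h_mertens h_scale hL hx D hD
  set T := primeTupleScale k x
  have : 1 ≤ T := by linarith
  have lt_Ncham : (k + 1) * T < Ncham x D := lt_of_lt_of_le (by nlinarith) (h_champ D hD)
  obtain ⟨h_card, h_pos, -⟩ := hD
  have nu_ne {q : ℕ} (hq : q.Prime) : nu (insert 0 D) q ≠ q := fun h ↦ by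
    have : (Ncham x D : ℝ) ≤ k + 1 := by exact_mod_cast h_card ▸ Ncham_le_of_nu_eq x hq h
    nlinarith
  refine ⟨fun d hd ↦ ⟨?_, ?_⟩, fun h ↦ ?_⟩
  · have : d ≠ 1 := fun h ↦ nu_ne Nat.prime_two (nu_insert_zero_two (h ▸ hd))
    have := h_pos d hd
    lia
  · by_contra! hdL
    linarith [Ncham_le_of_log_pow_lt hx h_card hd hdL]
  · obtain ⟨q, hq, hnu⟩ := exists_prime_nu_eq_of_singSeries_eq_zero h
    exact nu_ne hq hnu

lemma two_le_nu_insert_zero {D : Finset ℕ} {d p : ℕ} (hd : d ∈ D) (hpd : ¬ p ∣ d) :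
    2 ≤ nu (insert 0 D) p :=
  one_lt_card.2 ⟨0, mem_image.2 ⟨0, mem_insert_self _ _, Nat.zero_mod p⟩,
    d % p, mem_image.2 ⟨d, mem_insert_of_mem hd, rfl⟩,
    fun h ↦ hpd (Nat.dvd_of_mod_eq_zero h.symm)⟩

lemma log_diffProd_insert_zero_le {k : ℕ} {D : Finset ℕ} (hD : #D = k) {L : ℝ} (hL : 1 ≤ L)
    (hDL : ∀ d ∈ D, (d : ℝ) ≤ L ^ (k + 1)) :
    Real.log (diffProd (insert 0 D)) ≤ ((k : ℝ) + 1) ^ 3 * Real.log L := by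
  have card_le : (#(insert 0 D) : ℝ) ≤ k + 1 := mod_cast hD ▸ card_insert_le 0 D
  have := Real.log_nonneg hL
  refine (log_diffProd_le (A := L ^ (k + 1)) (one_le_pow₀ hL)
    (forall_mem_insert _ _ _ |>.2
      ⟨by simpa using pow_nonneg (zero_le_one.trans hL) _, hDL⟩)).trans ?_
  rw [Real.log_pow]
  calc (#(insert 0 D) : ℝ) ^ 2 * ((k + 1 : ℕ) * Real.log L)
      ≤ ((k : ℝ) + 1) ^ 2 * ((k + 1 : ℕ) * Real.log L) := by gcongr
    _ = ((k : ℝ) + 1) ^ 3 * Real.log L := by push_cast; ring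

lemma log_log_le_mul_primorialLevel {x : ℝ} (hY : 1 ≤ primorialLevel x) :
    Real.log (Real.log x) ≤ 16 * primorialLevel x := by
  have : Real.log (Real.log x) / 8 < primorialLevel x + 1 := Nat.lt_floor_add_one _
  have : (1 : ℝ) ≤ primorialLevel x := mod_cast hY
  linarith

theorem eventually_singSeries_le_of_not_dvd (k : ℕ) {p : ℕ} (hp : p.Prime) {ε : ℝ} (hε : 0 < ε) :
    ∀ᶠ x in atTop, ∀ D : Finset ℕ, #D = k →
      (∀ d ∈ D, 0 < d ∧ (d : ℝ) ≤ Real.log x ^ (k + 1)) → (∃ d ∈ D, ¬ p ∣ d) →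
        singSeries (insert 0 D) ≤
          (1 - 1 / ((p : ℝ) - 1)) * mertensProd (primorialLevel x) ^ k * (1 + ε) := by
  have h_exp : Tendsto
      (fun x ↦ Real.exp (k * (((k : ℝ) + 1) ^ 3 * 16) / Real.log (primorialLevel x)))
      atTop (nhds 1) :=
    Real.exp_zero ▸ (Real.continuous_exp.tendsto 0).comp
      (tendsto_log_primorialLevel.const_div_atTop _)
  filter_upwards [h_exp.eventually (eventually_le_nhds (lt_add_of_pos_right 1 hε)),
    tendsto_primorialLevel.eventually_ge_atTop p,
    Real.tendsto_log_atTop.eventually_ge_atTop 1] with x hx hpY hL D hD hDL ⟨d, hd, hpd⟩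
  set Y := primorialLevel x
  have Y_gt : 1 < Y := hp.one_lt.trans_le hpY
  have log_Y_pos : 0 < Real.log Y := Real.log_pos (mod_cast Y_gt)
  have : (0 : ℝ) < Y := mod_cast zero_lt_one.trans Y_gt
  have card_eq : #(insert 0 D) = k + 1 := by
    rw [card_insert_of_notMem fun h ↦ (hDL 0 h).1.false, hD]
  have exponent_le : k * Real.log (diffProd (insert 0 D)) / (Y * Real.log Y) ≤
      k * (((k : ℝ) + 1) ^ 3 * 16) / Real.log Y := by
    calc k * Real.log (diffProd (insert 0 D)) / (Y * Real.log Y)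
        ≤ k * (((k : ℝ) + 1) ^ 3 * (16 * Y)) / (Y * Real.log Y) := by
          gcongr
          refine (log_diffProd_insert_zero_le hD hL fun d hd ↦ (hDL d hd).2).trans ?_
          gcongr
          exact log_log_le_mul_primorialLevel Y_gt.le
      _ = _ := by field_simp
  have p_ge : (2 : ℝ) ≤ p := mod_cast hp.two_le
  have := mertensProd_pos Y
  have factor_nonneg : 0 ≤ 1 - 1 / ((p : ℝ) - 1) :=
    sub_nonneg.2 ((div_le_one (by linarith)).2 (by linarith))
  refine (singSeries_le_of_two_le_nu card_eq hp hpY (two_le_nu_insert_zero hd hpd)).trans ?_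
  gcongr
  exact (Real.exp_le_exp.2 exponent_le).trans hx

theorem eventually_primePi_le_of_not_dvd {k : ℕ} (HL : UniformHardyLittlewood k) {p : ℕ}
    (hp : p.Prime) {ε : ℝ} (hε : 0 < ε) :
    ∀ᶠ x in atTop, ∀ D : Finset ℕ, #D = k →
      (∀ d ∈ D, 2 ≤ d ∧ (d : ℝ) ≤ Real.log x ^ (k + 1)) → singSeries (insert 0 D) ≠ 0 →
        (∃ d ∈ D, ¬ p ∣ d) → (primePi x (insert 0 D) : ℝ) ≤
          (1 - 1 / ((p : ℝ) - 1)) * (1 + ε) ^ 2 *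
            (mertensProd (primorialLevel x) ^ k * primeTupleScale k x) := by
  filter_upwards [HL ε hε, eventually_singSeries_le_of_not_dvd k hp hε, eventually_gt_atTop 1]
    with x h_main h_sing hx D hD hDL hS hpd
  have := primeTupleScale_pos k hx
  calc (primePi x (insert 0 D) : ℝ)
      ≤ (1 + ε) * singSeries (insert 0 D) * primeTupleScale k x := by
        linarith [(abs_le.1 (h_main D hD hDL hS)).2]
    _ ≤ (1 + ε) * ((1 - 1 / ((p : ℝ) - 1)) * mertensProd (primorialLevel x) ^ k * (1 + ε)) *
          primeTupleScale k x := by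
        gcongr
        exact h_sing D hD (fun d hd ↦ ⟨two_pos.trans_le (hDL d hd).1, (hDL d hd).2⟩) hpd
    _ = _ := by ring

end JumpingChampion

/-- Theorem 1: under the uniform Hardy–Littlewood conjecture, any fixed
prime divides every element of all sufficiently large `k`-tuple jumping champions. -/
theorem stmt14 (k : ℕ) (hk : 1 ≤ k)
    (HL : ∀ ε : ℝ, 0 < ε → ∃ X : ℝ, ∀ x : ℝ, X ≤ x →
      ∀ D : Finset ℕ, D.card = k →
        (∀ d ∈ D, 2 ≤ d ∧ (d : ℝ) ≤ (Real.log x) ^ (k + 1)) →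
        singSeries (insert 0 D) ≠ 0 →
        |(primePi x (insert 0 D) : ℝ) -
            singSeries (insert 0 D) * x / (Real.log x) ^ (k + 1)| ≤
          ε * singSeries (insert 0 D) * x / (Real.log x) ^ (k + 1)) :
    ∀ p : ℕ, p.Prime → ∃ X : ℝ, ∀ x : ℝ, X ≤ x →
      ∀ D : Finset ℕ, IsChampion k x D → ∀ d ∈ D, p ∣ d := by
  intro p hp
  have hHL : JumpingChampion.UniformHardyLittlewood k := by
    simpa only [JumpingChampion.UniformHardyLittlewood, JumpingChampion.primeTupleScale,
      mul_div_assoc, Filter.eventually_atTop] using HL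
  have hp₁ : (1 : ℝ) ≤ p - 1 := by
    have : (2 : ℝ) ≤ p := mod_cast hp.two_le
    linarith
  set c : ℝ := 1 / ((p : ℝ) - 1)
  have c_pos : 0 < c := by positivity
  have c_le : c ≤ 1 := (div_le_one (by linarith)).2 hp₁
  have hε : 0 < c / 4 := by positivity
  have factor_lt : (1 - c) * (1 + c / 4) ^ 2 < 1 - c / 4 := by
    nlinarith [pow_pos c_pos 2, pow_pos c_pos 3]
  refine Filter.eventually_atTop.1 ?_
  filter_upwards [JumpingChampion.eventually_le_Ncham_of_isChampion hk hHL hε (by linarith),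
    JumpingChampion.eventually_admissible_of_isChampion hk hHL,
    JumpingChampion.eventually_primePi_le_of_not_dvd hHL hp hε,
    Filter.eventually_gt_atTop 1] with x h_lower h_adm h_upper hx D hD d hd
  by_contra hpd
  obtain ⟨hD_bounds, hS⟩ := h_adm D hD
  have main_pos := mul_pos (pow_pos (JumpingChampion.mertensProd_pos
    (JumpingChampion.primorialLevel x)) k) (JumpingChampion.primeTupleScale_pos k hx)
  have Ncham_le := (Nat.cast_le (α := ℝ)).2 (JumpingChampion.Ncham_le_primePi x D)
  have primePi_le := h_upper D hD.1 hD_bounds hS ⟨d, hd, hpd⟩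
  linarith [h_lower D hD, mul_lt_mul_of_pos_right factor_lt main_pos]
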